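/- arXiv:2512.22841 — 3 statements merged into one kernel-verified Lean document; each statement's English description precedes it below -/
import Mathlib

section
/- There exist a constant c ∈ ℕ and a computable sequence (Σ_n)_{n∈ℕ} of finite subsets of the free group FreeGroup (Fin 2) on two generators, with |Σ_n| = c for every n, such that: (1) for every n, the abelianization of PresentedGroup Σ_n is a torsion group (i.e., the group ⟨x,y | Σ_n⟩ has zero first Betti number); (2) for every n, PresentedGroup Σ_n is either trivial or infinite; (3) the set { n ∈ ℕ : PresentedGroup Σ_n is trivial (a subsingleton) } is recursively enumerable but not recursive. (Theorem 3.4 of the paper, due to Miller.) -/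
/-- The set of elements of a free group represented by a given list of words. -/
def wordsSet {Z : Type*} (L : List (List (Z × Bool))) : Set (FreeGroup Z) :=
  { w | ∃ l ∈ L, w = FreeGroup.mk l }

open Classical in
theorem free_model {I Γ : Type} [Group Γ] (g : I → Γ) (χ : Γ →* Multiplicative ℤ) (l r : I → ℤ)
    (hl : Function.Injective l) (hr : Function.Injective r) (hlr : ∀ i k, l i = r k → i = k)
    (hg : ∀ i, (l i ≠ r i ∧ g i ≠ 1) ∨ (l i = r i ∧ χ (g i) = Multiplicative.ofAdd 1)) :
    ∃ (P : Type) (_ : Group P) (ι : Γ →* P) (a : P),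
      Function.Injective (FreeGroup.lift (fun i => a ^ (-l i) * ι (g i) * a ^ (r i))) ∧
      Function.Injective (fun n : ℤ => a ^ n) := by
  -- layers on which the group acts through the character
  let T : ℤ → FreeGroup I := fun s =>
    if h : ∃ i, l i = s ∧ r i = s then FreeGroup.of h.choose else 1
  let Tp : ℤ → Prop := fun s => ∃ i, l i = s ∧ r i = s
  have hT : ∀ i, l i = r i → T (r i) = FreeGroup.of i := by
    intro i hi
    have h : ∃ k, l k = r i ∧ r k = r i := ⟨i, hi, rfl⟩
    have : h.choose = i := hr h.choose_spec.2
    simp only [T, dif_pos h, this]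
  let act : Γ → FreeGroup I × Γ × ℤ → FreeGroup I × Γ × ℤ := fun γ y =>
    if Tp y.2.2 then (T y.2.2 ^ (Multiplicative.toAdd (χ γ)) * y.1, y.2.1, y.2.2)
    else (y.1, γ * y.2.1, y.2.2)
  have act_mul : ∀ γ δ y, act (γ * δ) y = act γ (act δ y) := by
    intro γ δ y
    by_cases h : Tp y.2.2
    · simp [act, h, zpow_add, mul_assoc]
    · simp [act, h, mul_assoc]
  have act_one : ∀ y, act 1 y = y := by
    intro y
    by_cases h : Tp y.2.2 <;> simp [act, h]
  let ι : Γ →* Equiv.Perm (FreeGroup I × Γ × ℤ) :=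
    { toFun := fun γ => ⟨act γ, act γ⁻¹, fun y => by rw [← act_mul]; simp [act_one],
        fun y => by rw [← act_mul]; simp [act_one]⟩
      map_one' := by ext1 y; exact act_one y
      map_mul' := fun γ δ => by ext1 y; exact act_mul γ δ y }
  let E : FreeGroup I × ℤ → FreeGroup I × Γ × ℤ := fun p =>
    if h : ∃ i, l i = p.2 ∧ l i ≠ r i then
      ((FreeGroup.of h.choose)⁻¹ * p.1, g h.choose, r h.choose)
    else (p.1, 1, p.2)
  have hEl : ∀ i w, l i ≠ r i → E (w, l i) = ((FreeGroup.of i)⁻¹ * w, g i, r i) := by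
    intro i w hi
    have h : ∃ k, l k = l i ∧ l k ≠ r k := ⟨i, rfl, hi⟩
    have h2 : h.choose = i := hl h.choose_spec.1
    simp only [E, dif_pos h, h2]
  have hEn : ∀ n w, (¬ ∃ i, l i = n ∧ l i ≠ r i) → E (w, n) = (w, 1, n) := by
    intro n w h
    simp only [E, dif_neg h]
  have hEr : ∀ i w, E (w, r i) = (w, 1, r i) := by
    intro i w
    apply hEn
    rintro ⟨k, hk, hk'⟩
    have := hlr _ _ hk
    subst this
    exact hk' hk
  have hE : Function.Injective E := by
    rintro ⟨w, n⟩ ⟨w', n'⟩ h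
    by_cases h1 : ∃ i, l i = n ∧ l i ≠ r i <;> by_cases h2 : ∃ i, l i = n' ∧ l i ≠ r i
    · obtain ⟨i, rfl, hi⟩ := h1
      obtain ⟨k, rfl, hk⟩ := h2
      rw [hEl i w hi, hEl k w' hk] at h
      simp only [Prod.mk.injEq] at h
      have := hr h.2.2
      subst this
      simpa using h.1
    · obtain ⟨i, rfl, hi⟩ := h1
      rw [hEl i w hi, hEn _ w' h2] at h
      simp only [Prod.mk.injEq] at h
      rcases hg i with h3 | h3
      · exact absurd h.2.1 h3.2
      · exact absurd h3.1 hi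
    · obtain ⟨k, rfl, hk⟩ := h2
      rw [hEl k w' hk, hEn _ w h1] at h
      simp only [Prod.mk.injEq] at h
      rcases hg k with h3 | h3
      · exact absurd h.2.1.symm h3.2
      · exact absurd h3.1 hk
    · rw [hEn _ w h1, hEn _ w' h2] at h
      simp only [Prod.mk.injEq] at h
      simp [h.1, h.2.2]
  have hιE : ∀ i w, ι (g i) (E (w, r i)) = E (FreeGroup.of i * w, l i) := by
    intro i w
    rw [hEr]
    change act (g i) _ = _
    rcases hg i with h3 | h3
    · have : ¬ Tp (r i) := by
        rintro ⟨k, hk, hk'⟩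
        have := hr hk'
        subst this
        exact h3.1 hk
      rw [hEl _ _ h3.1]
      simp [act, this]
    · have : Tp (r i) := ⟨i, h3.1, rfl⟩
      rw [h3.1, hEr]
      simp [act, this, hT i h3.1, h3.2]
  let sh : Equiv.Perm (FreeGroup I × ℤ) := Equiv.prodCongr (Equiv.refl _) (Equiv.addRight 1)
  let a : Equiv.Perm (FreeGroup I × Γ × ℤ) := sh.extendDomain (Equiv.ofInjective E hE)
  have ha : ∀ w n, a (E (w, n)) = E (w, n + 1) := by
    intro w n
    have := Equiv.Perm.extendDomain_apply_image sh (Equiv.ofInjective E hE) (w, n)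
    simpa [sh] using this
  have hnat : ∀ (k : ℕ) w n, (a ^ k) (E (w, n)) = E (w, n + k) := by
    intro k
    induction k with
    | zero => intro w n; simp
    | succ k ih => intro w n; rw [pow_succ', Equiv.Perm.mul_apply, ih, ha]; push_cast; rw [add_assoc]
  have hz : ∀ (k : ℤ) w n, (a ^ k) (E (w, n)) = E (w, n + k) := by
    intro k w n
    rcases Int.eq_nat_or_neg k with ⟨k, rfl | rfl⟩
    · rw [zpow_natCast, hnat]
    · rw [zpow_neg, zpow_natCast, Equiv.Perm.inv_eq_iff_eq, hnat]; simp
  refine ⟨Equiv.Perm (FreeGroup I × Γ × ℤ), inferInstance, ι, a, ?_, ?_⟩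
  · have key : ∀ u w : FreeGroup I,
        FreeGroup.lift (fun i => a ^ (-l i) * ι (g i) * a ^ (r i)) u (E (w, 0)) = E (u * w, 0) := by
      intro u
      have h1 : ∀ i w, (a ^ (-l i) * ι (g i) * a ^ (r i)) (E (w, 0)) = E (FreeGroup.of i * w, 0) := by
        intro i w
        rw [Equiv.Perm.mul_apply, Equiv.Perm.mul_apply, hz, zero_add, hιE, hz]; simp
      induction u using FreeGroup.induction_on with
      | C1 => intro w; simp
      | of i => intro w; rw [FreeGroup.lift_apply_of]; exact h1 i w
      | inv_of i h => 
        intro w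
        rw [map_inv, Equiv.Perm.inv_eq_iff_eq, h]; simp
      | mul x y hx hy => intro w; rw [map_mul, Equiv.Perm.mul_apply, hy, hx, mul_assoc]
    intro u v huv
    have h1 := key u 1
    have h2 := key v 1
    rw [huv, h2] at h1
    have := hE h1
    simpa using this.symm
  · intro m n hmn
    have h1 := hz m 1 0
    have h2 := hz n 1 0
    simp only at hmn
    rw [hmn, h2] at h1
    have := hE h1
    simpa using this.symm

/-- exponents on the `a`-side, left. -/
def expPl : Fin 5 → ℤ := ![0, 1, 10, 13, 16]
/-- exponents on the `a`-side, right. -/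
def expPr : Fin 5 → ℤ := ![0, 1, 12, 15, 19]
/-- exponents on the `c`-side, left. -/
def expQl : Fin 5 → ℤ := ![0, 1, 10, 11, 12]
/-- exponents on the `c`-side, right. -/
def expQr : Fin 5 → ℤ := ![0, 2, 10, 11, 12]

theorem expo_cross {Gen : Type} (num : Gen → ℕ) (hnum : Function.Injective num)
    (u v : Fin 5 → ℤ) (huv : ∀ i k, u i = v k → i = k) (hu : ∀ i, u i < 20) (hv : ∀ i, v i < 20) :
    ∀ i k : Fin 5 ⊕ Gen, Sum.elim u (fun i => 20 + (num i : ℤ)) i =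
      Sum.elim v (fun i => 20 + (num i : ℤ)) k → i = k := by
  rintro (i | i) (k | k) h
  · simp only [Sum.elim_inl] at h; rw [huv i k h]
  · simp only [Sum.elim_inl, Sum.elim_inr] at h; have := hu i; omega
  · simp only [Sum.elim_inl, Sum.elim_inr] at h; have := hv k; omega
  · simp only [Sum.elim_inr] at h
    have : num i = num k := by omega
    rw [hnum this]

theorem amalgam {Γ Gen : Type} [Group Γ] (x : Gen → Γ) (num : Gen → ℕ)
    (hnum : Function.Injective num) (W : Γ) (hW : W ≠ 1) :
    ∃ (L : Type) (_ : Group L) (ι : Γ →* L) (a b c : L),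
      a⁻¹ * b * a = c⁻¹ * b * c ^ 2 ∧
      (∀ i, a ^ (-(20 + (num i : ℤ))) * (ι (x i) * b) * a ^ (20 + (num i : ℤ)) =
        c ^ (-(20 + (num i : ℤ))) * b * c ^ (20 + (num i : ℤ))) ∧
      a ^ (-10 : ℤ) * ι W * a ^ (12 : ℤ) = c ^ (-10 : ℤ) * b * c ^ (10 : ℤ) ∧
      a ^ (-13 : ℤ) * ι W * a ^ (15 : ℤ) = c ^ (-11 : ℤ) * b * c ^ (11 : ℤ) ∧
      a ^ (-16 : ℤ) * ι W * a ^ (19 : ℤ) = c ^ (-12 : ℤ) * b * c ^ (12 : ℤ) ∧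
      Function.Injective (fun n : ℤ => a ^ n) := by
  let z : Multiplicative ℤ := Multiplicative.ofAdd 1
  let I := Fin 5 ⊕ Gen
  let gP : I → Γ × Multiplicative ℤ :=
    Sum.elim ![(1, z), (1, z), (W, 1), (W, 1), (W, 1)] (fun i => (x i, z))
  let gQ : I → Multiplicative ℤ := fun _ => z
  have hz : z ≠ 1 := by decide
  obtain ⟨P, _, ιP, a, hP, ha⟩ := free_model gP (MonoidHom.snd _ _)
    (Sum.elim expPl (fun i => 20 + (num i : ℤ))) (Sum.elim expPr (fun i => 20 + (num i : ℤ)))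
    (expo_cross num hnum _ _ (by decide) (by decide) (by decide))
    (expo_cross num hnum _ _ (by decide) (by decide) (by decide))
    (expo_cross num hnum _ _ (by decide) (by decide) (by decide))
    (by
      rintro (i | i)
      · fin_cases i <;> simp [expPl, expPr, gP, hW, z]
      · simp [gP, z])
  obtain ⟨Q, _, ιQ, c, hQ, hc⟩ := free_model gQ (MonoidHom.id _)
    (Sum.elim expQl (fun i => 20 + (num i : ℤ))) (Sum.elim expQr (fun i => 20 + (num i : ℤ)))
    (expo_cross num hnum _ _ (by decide) (by decide) (by decide))
    (expo_cross num hnum _ _ (by decide) (by decide) (by decide))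
    (expo_cross num hnum _ _ (by decide) (by decide) (by decide))
    (by
      rintro (i | i)
      · fin_cases i <;> simp [expQl, expQr, gQ, z]
      · simp [gQ, z])
  let G : Bool → Type := fun t => if t then P else Q
  letI : ∀ t, Group (G t) := fun t => by
    cases t
    · exact (inferInstance : Group Q)
    · exact (inferInstance : Group P)
  let φ : ∀ t, FreeGroup I →* G t := fun t => match t with
    | false => FreeGroup.lift (fun i => c ^ (-(Sum.elim expQl (fun i => 20 + (num i : ℤ)) i)) *
        ιQ (gQ i) * c ^ (Sum.elim expQr (fun i => 20 + (num i : ℤ)) i))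
    | true => FreeGroup.lift (fun i => a ^ (-(Sum.elim expPl (fun i => 20 + (num i : ℤ)) i)) *
        ιP (gP i) * a ^ (Sum.elim expPr (fun i => 20 + (num i : ℤ)) i))
  have hφ : ∀ t, Function.Injective (φ t) := fun t => by
    cases t
    · exact hQ
    · exact hP
  let jP : P →* Monoid.PushoutI φ := Monoid.PushoutI.of (φ := φ) true
  let jQ : Q →* Monoid.PushoutI φ := Monoid.PushoutI.of (φ := φ) false
  have hj : Function.Injective jP := Monoid.PushoutI.of_injective hφ true
  have key : ∀ i, jP (a ^ (-(Sum.elim expPl (fun i => 20 + (num i : ℤ)) i)) *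
        ιP (gP i) * a ^ (Sum.elim expPr (fun i => 20 + (num i : ℤ)) i)) =
      jQ (c ^ (-(Sum.elim expQl (fun i => 20 + (num i : ℤ)) i)) *
        ιQ (gQ i) * c ^ (Sum.elim expQr (fun i => 20 + (num i : ℤ)) i)) := by
    intro i
    have h1 := Monoid.PushoutI.of_apply_eq_base φ true (FreeGroup.of i)
    have h2 := Monoid.PushoutI.of_apply_eq_base φ false (FreeGroup.of i)
    have h3 := h1.trans h2.symm
    simp only [φ] at h3
    erw [FreeGroup.lift_apply_of, FreeGroup.lift_apply_of] at h3
    exact h3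
  have hb : jP (ιP (1, z)) = jQ (ιQ z) := by
    have := key (Sum.inl 0)
    simpa [expPl, expPr, expQl, expQr, gP, gQ] using this
  refine ⟨Monoid.PushoutI φ, inferInstance, jP.comp (ιP.comp (MonoidHom.inl _ _)), jP a, jQ (ιQ z),
    jQ c, ?_, ?_, ?_, ?_, ?_, ?_⟩
  · have := key (Sum.inl 1)
    simpa [expPl, expPr, expQl, expQr, gP, gQ, hb] using this
  · intro i
    have := key (Sum.inr i)
    have h3 : jP (ιP (x i, z)) = jP (ιP (x i, 1)) * jQ (ιQ z) := by
      rw [← hb, ← map_mul, ← map_mul]; simp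
    simpa [gP, gQ, h3] using this
  · have := key (Sum.inl 2)
    simpa [expPl, expPr, expQl, expQr, gP, gQ] using this
  · have := key (Sum.inl 3)
    simpa [expPl, expPr, expQl, expQr, gP, gQ] using this
  · have := key (Sum.inl 4)
    simpa [expPl, expPr, expQl, expQr, gP, gQ] using this
  · intro m n hmn
    apply ha
    apply hj
    simpa using hmn

/-- The word `c` in terms of the two generators. -/
def wC {G : Type*} [Group G] (b e : G) : G := b⁻¹ * e * b * e⁻¹
/-- The word `a` in terms of the two generators. -/
def wA {G : Type*} [Group G] (b e : G) : G := e⁻¹ * wC b e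
/-- The word standing for the generator with number `N`. -/
def wX {G : Type*} [Group G] (a b c : G) (N : ℤ) : G :=
  a ^ N * c ^ (-N) * b * c ^ N * a ^ (-N) * b⁻¹
/-- First extra relator. -/
def wR1 {G : Type*} [Group G] (a b c w : G) : G :=
  a ^ (-10 : ℤ) * w * a ^ (12 : ℤ) * (c ^ (-10 : ℤ) * b⁻¹ * c ^ (10 : ℤ))
/-- Second extra relator. -/
def wR2 {G : Type*} [Group G] (a b c w : G) : G :=
  a ^ (-13 : ℤ) * w * a ^ (15 : ℤ) * (c ^ (-11 : ℤ) * b⁻¹ * c ^ (11 : ℤ))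
/-- Third extra relator. -/
def wR3 {G : Type*} [Group G] (a b c w : G) : G :=
  a ^ (-16 : ℤ) * w * a ^ (19 : ℤ) * (c ^ (-12 : ℤ) * b⁻¹ * c ^ (12 : ℤ))

section
variable {G H : Type*} [Group G] [Group H] (φ : G →* H)
theorem map_wC (b e : G) : φ (wC b e) = wC (φ b) (φ e) := by simp [wC]
theorem map_wA (b e : G) : φ (wA b e) = wA (φ b) (φ e) := by simp [wA, map_wC]
theorem map_wX (a b c : G) (N : ℤ) : φ (wX a b c N) = wX (φ a) (φ b) (φ c) N := by simp [wX]
theorem map_wR1 (a b c w : G) : φ (wR1 a b c w) = wR1 (φ a) (φ b) (φ c) (φ w) := by simp [wR1]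
theorem map_wR2 (a b c w : G) : φ (wR2 a b c w) = wR2 (φ a) (φ b) (φ c) (φ w) := by simp [wR2]
theorem map_wR3 (a b c w : G) : φ (wR3 a b c w) = wR3 (φ a) (φ b) (φ c) (φ w) := by simp [wR3]
end

/-- generator `b`. -/
def gB : FreeGroup (Fin 2) := FreeGroup.of 0
/-- generator `e`. -/
def gE : FreeGroup (Fin 2) := FreeGroup.of 1
/-- element `c`. -/
def gC : FreeGroup (Fin 2) := wC gB gE
/-- element `a`. -/
def gA : FreeGroup (Fin 2) := wA gB gE

/-- The encoding homomorphism into the free group of rank two. -/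
def encHom {Gen : Type} (num : Gen → ℕ) : FreeGroup Gen →* FreeGroup (Fin 2) :=
  FreeGroup.lift (fun i => wX gA gB gC (20 + (num i : ℤ)))

/-- The set of relators. -/
def relSet {Gen : Type} (num : Gen → ℕ) (R : Set (FreeGroup Gen)) (W : FreeGroup Gen) :
    Set (FreeGroup (Fin 2)) :=
  encHom num '' R ∪ {wR1 gA gB gC (encHom num W),
    wR2 gA gB gC (encHom num W) * wR3 gA gB gC (encHom num W), wR3 gA gB gC (encHom num W)}

/-- Basic collapse computation. -/
theorem collapse_calc {G : Type*} [Group G] (a b c : G) (h1 : wR1 a b c 1 = 1)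
    (h2 : wR2 a b c 1 = 1) (h3 : wR3 a b c 1 = 1) : a = 1 ∧ b = 1 := by
  have e1 : a ^ 2 = c ^ (-10 : ℤ) * b * c ^ (10 : ℤ) := by
    have := eq_inv_of_mul_eq_one_left h1
    simp only [mul_one, ← zpow_add, mul_inv_rev, inv_inv, ← zpow_neg] at this
    rw [mul_assoc, ← zpow_natCast]; simpa using this
  have e2 : a ^ 2 = c ^ (-11 : ℤ) * b * c ^ (11 : ℤ) := by
    have := eq_inv_of_mul_eq_one_left h2
    simp only [mul_one, ← zpow_add, mul_inv_rev, inv_inv, ← zpow_neg] at this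
    rw [mul_assoc, ← zpow_natCast]; simpa using this
  have e3 : a ^ 3 = c ^ (-12 : ℤ) * b * c ^ (12 : ℤ) := by
    have := eq_inv_of_mul_eq_one_left h3
    simp only [mul_one, ← zpow_add, mul_inv_rev, inv_inv, ← zpow_neg] at this
    rw [mul_assoc, ← zpow_natCast]; simpa using this
  have hc : Commute c b := by
    have : b = c⁻¹ * b * c := by
      have h := e1.symm.trans e2
      calc b = c ^ (10 : ℤ) * (c ^ (-10 : ℤ) * b * c ^ (10 : ℤ)) * c ^ (-10 : ℤ) := by group
        _ = _ := by rw [h]; group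
    have h4 : c * b = b * c := by
      conv_lhs => rw [this]
      group
    exact h4
  have hz : ∀ n : ℤ, c ^ (-n) * b * c ^ n = b := by
    intro n
    rw [(hc.zpow_left (-n)).eq, mul_assoc, ← zpow_add]; simp
  rw [hz] at e1 e3
  have ha : a = 1 := by
    have : a ^ 3 = a ^ 2 := by rw [e3, e1]
    rw [pow_succ] at this
    simpa using this
  refine ⟨ha, ?_⟩
  rw [← e1, ha]; simp

theorem triv_of_AB {G : Type*} [Group G] (b e : G) (ha : wA b e = 1) (hb : b = 1) : e = 1 := by
  subst hb
  simpa [wA, wC] using ha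

theorem presented_subsingleton_of {N : Type*} [Group N] {S : Set (FreeGroup (Fin 2))}
    (φ : PresentedGroup S →* N) (h0 : φ (PresentedGroup.of 0) = 1) (h1 : φ (PresentedGroup.of 1) = 1) :
    φ = 1 := by
  apply PresentedGroup.ext
  intro i
  fin_cases i
  · simpa using h0
  · simpa using h1

theorem rel_trivial {Gen : Type} (num : Gen → ℕ) (R : Set (FreeGroup Gen)) (W : FreeGroup Gen)
    (hW : W ∈ Subgroup.normalClosure R) : Subsingleton (PresentedGroup (relSet num R W)) := by
  set S := relSet num R W with hS
  let π : FreeGroup (Fin 2) →* PresentedGroup S := PresentedGroup.mk S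
  have hrel : ∀ r ∈ S, π r = 1 := fun r hr => PresentedGroup.one_of_mem hr
  have hWk : π (encHom num W) = 1 := by
    have : Subgroup.normalClosure R ≤ (π.comp (encHom num)).ker := by
      apply Subgroup.normalClosure_le_normal
      intro r hr
      exact hrel _ (Or.inl ⟨r, hr, rfl⟩)
    exact this hW
  have h1 := hrel (wR1 gA gB gC (encHom num W)) (Or.inr (by simp))
  have h2 := hrel (wR2 gA gB gC (encHom num W) * wR3 gA gB gC (encHom num W)) (Or.inr (by simp))
  have h3 := hrel (wR3 gA gB gC (encHom num W)) (Or.inr (by simp))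
  rw [map_mul, h3, mul_one] at h2
  rw [map_wR1, hWk] at h1
  rw [map_wR2, hWk] at h2
  rw [map_wR3, hWk] at h3
  obtain ⟨ha, hb⟩ := collapse_calc _ _ _ h1 h2 h3
  have he : π gE = 1 := by
    apply triv_of_AB (π gB) (π gE) _ hb
    rw [← map_wA]; exact ha
  have := presented_subsingleton_of (MonoidHom.id (PresentedGroup S)) hb he
  refine ⟨fun x y => ?_⟩
  have hx := DFunLike.congr_fun this x
  have hy := DFunLike.congr_fun this y
  simp only [MonoidHom.id_apply, MonoidHom.one_apply] at hx hy
  rw [hx, hy]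

theorem wX_comm {G : Type*} [CommGroup G] (a b c : G) (N : ℤ) : wX a b c N = 1 := by
  simp only [wX, zpow_neg]
  have : a ^ N * (c ^ N)⁻¹ * b * c ^ N * (a ^ N)⁻¹ * b⁻¹ =
    (a ^ N * (a ^ N)⁻¹) * (c ^ N * (c ^ N)⁻¹) * (b * b⁻¹) := by
      simp only [mul_assoc, mul_comm, mul_left_comm]
  rw [this]; simp

theorem enc_comm {Gen : Type} (num : Gen → ℕ) {G : Type*} [CommGroup G]
    (φ : FreeGroup (Fin 2) →* G) (W : FreeGroup Gen) : φ (encHom num W) = 1 := by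
  have : φ.comp (encHom num) = 1 := by
    ext i
    simp only [MonoidHom.comp_apply, encHom, FreeGroup.lift_apply_of, map_wX, wX_comm]
    simp
  exact DFunLike.congr_fun this W

theorem rel_torsion {Gen : Type} (num : Gen → ℕ) (R : Set (FreeGroup Gen)) (W : FreeGroup Gen) :
    Monoid.IsTorsion (Abelianization (PresentedGroup (relSet num R W))) := by
  set S := relSet num R W with hS
  let π : FreeGroup (Fin 2) →* Abelianization (PresentedGroup S) :=
    Abelianization.of.comp (PresentedGroup.mk S)
  have hrel : ∀ r ∈ S, π r = 1 := fun r hr => by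
    simp only [π, MonoidHom.comp_apply, PresentedGroup.one_of_mem hr, map_one]
  have hWk : π (encHom num W) = 1 := enc_comm num π W
  have h1 := hrel (wR1 gA gB gC (encHom num W)) (Or.inr (by simp))
  have h2 := hrel (wR2 gA gB gC (encHom num W) * wR3 gA gB gC (encHom num W)) (Or.inr (by simp))
  have h3 := hrel (wR3 gA gB gC (encHom num W)) (Or.inr (by simp))
  rw [map_mul, h3, mul_one] at h2
  rw [map_wR1, hWk] at h1
  rw [map_wR2, hWk] at h2
  rw [map_wR3, hWk] at h3
  obtain ⟨ha, hb⟩ := collapse_calc _ _ _ h1 h2 h3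
  have he : π gE = 1 := by
    apply triv_of_AB (π gB) (π gE) _ hb
    rw [← map_wA]; exact ha
  have := presented_subsingleton_of (Abelianization.of (G := PresentedGroup S)) hb he
  intro x
  have hx : x = 1 := by
    obtain ⟨y, rfl⟩ := QuotientGroup.mk_surjective x
    exact DFunLike.congr_fun this y
  rw [hx]
  exact IsOfFinOrder.one

theorem rel_infinite {Gen : Type} (num : Gen → ℕ) (hnum : Function.Injective num)
    (R : Set (FreeGroup Gen)) (W : FreeGroup Gen)
    (hW : W ∉ Subgroup.normalClosure R) : Infinite (PresentedGroup (relSet num R W)) := by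
  obtain ⟨L, _, ι, a, b, c, hc, hx, h1, h2, h3, hinf⟩ := amalgam (Γ := PresentedGroup R)
    (fun i : Gen => PresentedGroup.of i) num hnum (PresentedGroup.mk R W)
    (fun h => hW ((PresentedGroup.mk_eq_one_iff).1 h))
  let ψ : FreeGroup (Fin 2) →* L := FreeGroup.lift ![b, c * a⁻¹]
  have hψb : ψ gB = b := by simp [ψ, gB]
  have hψe : ψ gE = c * a⁻¹ := by simp [ψ, gE]
  have hψc : ψ gC = c := by
    rw [gC, map_wC, hψb, hψe, wC]
    have : b⁻¹ * (c * a⁻¹) * b * (c * a⁻¹)⁻¹ = b⁻¹ * c * (a⁻¹ * b * a) * c⁻¹ := by group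
    rw [this, hc]; group
  have hψa : ψ gA = a := by
    have : gA = gE⁻¹ * gC := rfl
    rw [this, map_mul, map_inv, hψc, hψe]; group
  have hψX : ∀ w, ψ (encHom num w) = ι (PresentedGroup.mk R w) := by
    have : ψ.comp (encHom num) = ι.comp (PresentedGroup.mk R) := by
      ext i
      simp only [MonoidHom.comp_apply, encHom, FreeGroup.lift_apply_of, map_wX, hψa, hψb, hψc]
      have := hx i
      change _ = ι (PresentedGroup.of i)
      generalize (20 + (num i : ℤ)) = N at *
      have h5 : wX a b c N = a ^ N * (c ^ (-N) * b * c ^ N) * a ^ (-N) * b⁻¹ := by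
        simp only [wX, mul_assoc]
      rw [h5, ← this]; group
    intro w; exact DFunLike.congr_fun this w
  have k1 : ψ (wR1 gA gB gC (encHom num W)) = 1 := by
    rw [map_wR1, hψa, hψb, hψc, hψX, wR1, h1]; group
  have k2 : ψ (wR2 gA gB gC (encHom num W)) = 1 := by
    rw [map_wR2, hψa, hψb, hψc, hψX, wR2, h2]; group
  have k3 : ψ (wR3 gA gB gC (encHom num W)) = 1 := by
    rw [map_wR3, hψa, hψb, hψc, hψX, wR3, h3]; group
  have hrel : ∀ r ∈ relSet num R W, ψ r = 1 := by
    rintro r (⟨s, hs, rfl⟩ | hr)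
    · rw [hψX, PresentedGroup.one_of_mem hs, map_one]
    · simp only [Set.mem_insert_iff, Set.mem_singleton_iff] at hr
      rcases hr with rfl | rfl | rfl
      · exact k1
      · rw [map_mul, k2, k3, mul_one]
      · exact k3
  let Ψ : PresentedGroup (relSet num R W) →* L := PresentedGroup.toGroup hrel
  refine Infinite.of_injective (fun n : ℤ => (PresentedGroup.mk (relSet num R W) gA) ^ n) ?_
  intro m n hmn
  apply hinf
  have := congrArg Ψ hmn
  have h6 : Ψ (PresentedGroup.mk (relSet num R W) gA) = a := by
    rw [← hψa]; rfl
  simpa [h6] using this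

/-- A grading used to tell relators apart. -/
def gradHom : FreeGroup (Fin 2) →* Multiplicative ℤ :=
  FreeGroup.lift ![Multiplicative.ofAdd 1, Multiplicative.ofAdd (-1)]

theorem rel_ncard {Gen : Type} (num : Gen → ℕ) (R : Set (FreeGroup Gen)) (hR : R.Finite)
    (W : FreeGroup Gen) : (relSet num R W).ncard = (encHom num '' R).ncard + 3 := by
  have hE : ∀ w, gradHom (encHom num w) = 1 := enc_comm num gradHom
  have hb : gradHom gB = Multiplicative.ofAdd 1 := by simp [gradHom, gB]
  have he : gradHom gE = Multiplicative.ofAdd (-1) := by simp [gradHom, gE]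
  have hc : gradHom gC = 1 := by rw [gC, map_wC, hb, he]; decide
  have ha : gradHom gA = Multiplicative.ofAdd 1 := by rw [gA, map_wA, hb, he]; decide
  have k1 : gradHom (wR1 gA gB gC (encHom num W)) = Multiplicative.ofAdd 1 := by
    rw [map_wR1, ha, hb, hc, hE]; decide
  have k2 : gradHom (wR2 gA gB gC (encHom num W)) = Multiplicative.ofAdd 1 := by
    rw [map_wR2, ha, hb, hc, hE]; decide
  have k3 : gradHom (wR3 gA gB gC (encHom num W)) = Multiplicative.ofAdd 2 := by
    rw [map_wR3, ha, hb, hc, hE]; decide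
  have k23 : gradHom (wR2 gA gB gC (encHom num W) * wR3 gA gB gC (encHom num W)) =
      Multiplicative.ofAdd 3 := by rw [map_mul, k2, k3]; decide
  have hne : ∀ {x y : FreeGroup (Fin 2)}, gradHom x ≠ gradHom y → x ≠ y := by
    intro x y h he; exact h (by rw [he])
  rw [relSet, Set.ncard_union_eq _ (hR.image _) (Set.toFinite _)]
  · congr 1
    rw [Set.ncard_eq_three]
    refine ⟨_, _, _, hne ?_, hne ?_, hne ?_, rfl⟩
    · rw [k1, k23]; decide
    · rw [k1, k3]; decide
    · rw [k23, k3]; decide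
  · rw [Set.disjoint_left]
    rintro _ ⟨r, hr, rfl⟩ h
    have := hE r
    simp only [Set.mem_insert_iff, Set.mem_singleton_iff] at h
    rcases h with h | h | h <;> rw [h] at this
    · rw [k1] at this; exact absurd this (by decide)
    · rw [k23] at this; exact absurd this (by decide)
    · rw [k3] at this; exact absurd this (by decide)

section XProd
variable {ι : Type} [Fintype ι]

/-- Product of integer powers of the family `x`. -/
noncomputable def xprod {G : Type*} [Group G] (x : ι → G) (v : ι → ℤ) : G :=
  (Finset.univ.toList.map fun i => x i ^ v i).prod

theorem map_xprod {G H : Type*} [Group G] [Group H] (φ : G →* H) (x : ι → G) (v : ι → ℤ) :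
    φ (xprod x v) = xprod (fun i => φ (x i)) v := by
  simp only [xprod, map_list_prod, List.map_map]
  congr 2
  ext i
  simp

theorem xprod_add {G : Type*} [Group G] (x : ι → G) (hx : ∀ i j, Commute (x i) (x j))
    (v w : ι → ℤ) : xprod x (v + w) = xprod x v * xprod x w := by
  simp only [xprod]
  generalize (Finset.univ : Finset ι).toList = l
  induction l with
  | nil => simp
  | cons i l ih =>
    rw [List.map_cons, List.prod_cons, ih]
    simp only [List.map_cons, List.prod_cons, Pi.add_apply, zpow_add]
    have hc : Commute (x i ^ w i) ((l.map fun i => x i ^ v i).prod) := by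
      apply Commute.list_prod_right
      intro y hy
      obtain ⟨j, _, rfl⟩ := List.mem_map.1 hy
      exact ((hx i j).zpow_zpow _ _)
    simp only [mul_assoc]
    congr 1
    simp only [← mul_assoc]
    rw [hc.eq]

theorem xprod_mul {G : Type*} [Group G] (x : ι → G) (m : ι → ℕ) (v : ι → ℤ) :
    xprod x (fun i => (m i : ℤ) * v i) = xprod (fun i => x i ^ m i) v := by
  simp only [xprod, zpow_mul, zpow_natCast]

/-- conjugate of `t` by `xprod x v`. -/
noncomputable def tconj {G : Type*} [Group G] (x : ι → G) (t : G) (v : ι → ℤ) : G :=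
  xprod x v * t * (xprod x v)⁻¹

theorem map_tconj {G H : Type*} [Group G] [Group H] (φ : G →* H) (x : ι → G) (t : G) (v : ι → ℤ) :
    φ (tconj x t v) = tconj (fun i => φ (x i)) (φ t) v := by
  simp [tconj, map_xprod]

theorem tconj_add {G : Type*} [Group G] (x : ι → G) (hx : ∀ i j, Commute (x i) (x j)) (t : G)
    (v w : ι → ℤ) : tconj x t (v + w) = xprod x w * tconj x t v * (xprod x w)⁻¹ := by
  rw [add_comm, tconj, xprod_add x hx, tconj]; group

end XProd

/-- An affine rewriting system on integer vectors. -/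
structure AffSys (ι J : Type) where
  /-- source offset -/
  p : J → ι → ℤ
  /-- target offset -/
  q : J → ι → ℤ
  /-- source modulus -/
  m : J → ι → ℕ
  /-- target modulus -/
  m' : J → ι → ℕ
  hm : ∀ j i, m j i ≠ 0
  hm' : ∀ j i, m' j i ≠ 0

namespace AffSys
variable {ι J : Type} (A : AffSys ι J)

/-- source affine map -/
def src (j : J) (u : ι → ℤ) : ι → ℤ := A.p j + fun i => (A.m j i : ℤ) * u i
/-- target affine map -/
def tgt (j : J) (u : ι → ℤ) : ι → ℤ := A.q j + fun i => (A.m' j i : ℤ) * u i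

/-- one step of rewriting -/
def Step (v w : ι → ℤ) : Prop := ∃ j u, v = A.src j u ∧ w = A.tgt j u

/-- The relations satisfied by the group elements. -/
structure Rels [Fintype ι] {G : Type*} [Group G] (v0 : ι → ℤ) (x : ι → G) (t k : G) (r : J → G) : Prop where
  comm : ∀ i j, x i * x j * (x i)⁻¹ * (x j)⁻¹ = 1
  rx : ∀ j i, r j * x i ^ A.m j i * (r j)⁻¹ * (x i ^ A.m' j i)⁻¹ = 1
  rt : ∀ j, r j * tconj x t (A.p j) * (r j)⁻¹ * (tconj x t (A.q j))⁻¹ = 1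
  kr : ∀ j, k * r j * k⁻¹ * (r j)⁻¹ = 1
  kt : k * tconj x t v0 * k⁻¹ * (tconj x t v0)⁻¹ = 1

variable [Fintype ι]

theorem Rels.forward {A : AffSys ι J} {G : Type*} [Group G] {v0 : ι → ℤ} {x : ι → G} {t k : G}
    {r : J → G} (h : A.Rels v0 x t k r) {v : ι → ℤ} (hv : Relation.ReflTransGen A.Step v v0) :
    k * tconj x t v * k⁻¹ * (tconj x t v)⁻¹ = 1 := by
  have hx : ∀ i j, Commute (x i) (x j) := fun i j => by
    have := h.comm i j
    rw [mul_inv_eq_one, mul_inv_eq_iff_eq_mul] at this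
    exact this
  induction hv using Relation.ReflTransGen.head_induction_on with
  | refl => exact h.kt
  | head hs _ ih =>
    obtain ⟨j, u, rfl, rfl⟩ := hs
    have h1 : ∀ i, r j * x i ^ A.m j i * (r j)⁻¹ = x i ^ A.m' j i := fun i => by
      have := h.rx j i
      rwa [mul_inv_eq_one] at this
    have h2 : r j * tconj x t (A.p j) * (r j)⁻¹ = tconj x t (A.q j) := by
      have := h.rt j
      rwa [mul_inv_eq_one] at this
    have h3 : r j * xprod x (fun i => (A.m j i : ℤ) * u i) * (r j)⁻¹ =
        xprod x (fun i => (A.m' j i : ℤ) * u i) := by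
      rw [xprod_mul, xprod_mul]
      have := map_xprod (MulAut.conj (r j)).toMonoidHom (fun i => x i ^ A.m j i) u
      simp only [MulEquiv.coe_toMonoidHom, MulAut.conj_apply, h1] at this
      exact this
    have h4 : r j * tconj x t (A.src j u) * (r j)⁻¹ = tconj x t (A.tgt j u) := by
      rw [src, tgt, tconj_add x hx, tconj_add x hx, ← h2, ← h3]; group
    have h5 : Commute k (r j) := by
      have := h.kr j
      rw [mul_inv_eq_one, mul_inv_eq_iff_eq_mul] at this
      exact this
    have h6 : Commute k (tconj x t (A.tgt j u)) := by
      rw [mul_inv_eq_one, mul_inv_eq_iff_eq_mul] at ih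
      exact ih
    have h7 : tconj x t (A.src j u) = (r j)⁻¹ * tconj x t (A.tgt j u) * r j := by
      rw [← h4]; group
    rw [mul_inv_eq_one, mul_inv_eq_iff_eq_mul, h7]
    exact (((h5.inv_right).mul_right h6).mul_right h5).eq

end AffSys

/-- The lamp group over integer vectors. -/
@[ext] structure Lamp (ι : Type) where
  /-- lamp configuration -/
  f : (ι → ℤ) →₀ ℤ
  /-- position -/
  v : ι → ℤ

namespace Lamp
variable {ι : Type}

/-- shifting a configuration -/
noncomputable def shift (v : ι → ℤ) (f : (ι → ℤ) →₀ ℤ) : (ι → ℤ) →₀ ℤ := f.mapDomain (fun w => v + w)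

theorem shift_add (v : ι → ℤ) (f g) : shift v (f + g) = shift v f + shift v g :=
  Finsupp.mapDomain_add
theorem shift_shift (v w : ι → ℤ) (f) : shift v (shift w f) = shift (v + w) f := by
  simp only [shift, ← Finsupp.mapDomain_comp]
  congr 1
  ext1 u
  simp [add_assoc]
theorem shift_zero (f : (ι → ℤ) →₀ ℤ) : shift 0 f = f := by
  simp only [shift, zero_add]
  exact Finsupp.mapDomain_id
theorem shift_map0 (v : ι → ℤ) : shift v 0 = 0 := Finsupp.mapDomain_zero

noncomputable instance : Mul (Lamp ι) := ⟨fun a b => ⟨a.f + shift a.v b.f, a.v + b.v⟩⟩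
noncomputable instance : One (Lamp ι) := ⟨⟨0, 0⟩⟩
noncomputable instance : Inv (Lamp ι) := ⟨fun a => ⟨-shift (-a.v) a.f, -a.v⟩⟩

theorem mul_f (a b : Lamp ι) : (a * b).f = a.f + shift a.v b.f := rfl
theorem mul_v (a b : Lamp ι) : (a * b).v = a.v + b.v := rfl
theorem one_f : (1 : Lamp ι).f = 0 := rfl
theorem one_v : (1 : Lamp ι).v = 0 := rfl
theorem inv_f (a : Lamp ι) : (a⁻¹).f = -shift (-a.v) a.f := rfl
theorem inv_v (a : Lamp ι) : (a⁻¹).v = -a.v := rfl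

noncomputable instance : Group (Lamp ι) := Group.ofLeftAxioms
  (fun a b c => by
    ext1
    · simp only [mul_f, mul_v, shift_add, shift_shift, add_assoc]
    · simp only [mul_v, add_assoc])
  (fun a => by
    ext1
    · simp only [mul_f, one_f, one_v, shift_zero, zero_add]
    · simp only [mul_v, one_v, zero_add])
  (fun a => by
    ext1
    · simp only [mul_f, inv_f, inv_v, one_f, neg_add_cancel]
    · simp only [mul_v, inv_v, one_v, neg_add_cancel])

instance [Finite ι] : Countable (Lamp ι) := by
  have : Function.Injective (fun a : Lamp ι => (a.f, a.v)) := by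
    intro a b h
    simp only [Prod.mk.injEq] at h
    exact Lamp.ext h.1 h.2
  exact this.countable

/-- the affine endomorphism -/
noncomputable def aff (p : ι → ℤ) (m : ι → ℕ) : Lamp ι →* Lamp ι where
  toFun a := ⟨a.f.mapDomain (fun v => p + fun i => (m i : ℤ) * v i), fun i => (m i : ℤ) * a.v i⟩
  map_one' := by
    ext1
    · exact Finsupp.mapDomain_zero (f := fun v : ι → ℤ => p + fun i => (m i : ℤ) * v i)
    · funext i
      change (m i : ℤ) * 0 = 0
      simp
  map_mul' a b := by
    ext1
    · simp only [mul_f, shift, Finsupp.mapDomain_add, ← Finsupp.mapDomain_comp]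
      congr 2
      funext v
      funext i
      simp only [Function.comp, Pi.add_apply]
      ring
    · funext i
      change (m i : ℤ) * (a.v i + b.v i) = _
      rw [mul_add]; rfl

theorem aff_inj_aux (p : ι → ℤ) (m : ι → ℕ) (hm : ∀ i, m i ≠ 0) :
    Function.Injective (fun v : ι → ℤ => p + fun i => (m i : ℤ) * v i) := by
  intro v w h
  funext i
  have := congrFun h i
  simp only [Pi.add_apply, add_right_inj] at this
  exact mul_left_cancel₀ (by exact_mod_cast hm i) this

theorem aff_injective (p : ι → ℤ) (m : ι → ℕ) (hm : ∀ i, m i ≠ 0) :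
    Function.Injective (aff p m) := by
  intro a b h
  have h1 := congrArg Lamp.f h
  have h2 := congrArg Lamp.v h
  ext1
  · exact Finsupp.mapDomain_injective (aff_inj_aux p m hm) h1
  · funext i
    have := congrFun h2 i
    exact mul_left_cancel₀ (by exact_mod_cast hm i) this

/-- translations -/
noncomputable def tr : Multiplicative (ι → ℤ) →* Lamp ι where
  toFun v := ⟨0, v.toAdd⟩
  map_one' := rfl
  map_mul' a b := by
    ext1
    · simp only [mul_f, shift_map0, add_zero]
    · rfl

/-- subgroup supported in a set -/
def sup (H0 : Set (ι → ℤ)) : Subgroup (Lamp ι) where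
  carrier := {a | a.v = 0 ∧ ∀ v, a.f v ≠ 0 → v ∈ H0}
  one_mem' := ⟨rfl, fun v hv => absurd rfl hv⟩
  mul_mem' := by
    rintro a b ⟨ha, ha'⟩ ⟨hb, hb'⟩
    refine ⟨by rw [mul_v, ha, hb, add_zero], fun v hv => ?_⟩
    rw [mul_f, ha, shift_zero, Finsupp.add_apply] at hv
    by_cases h : a.f v = 0
    · rw [h, zero_add] at hv; exact hb' v hv
    · exact ha' v h
  inv_mem' := by
    rintro a ⟨ha, ha'⟩
    refine ⟨by rw [inv_v, ha, neg_zero], fun v hv => ?_⟩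
    rw [inv_f, ha, neg_zero, shift_zero, Finsupp.neg_apply, neg_ne_zero] at hv
    exact ha' v hv

theorem aff_mem_sup (H0 : Set (ι → ℤ)) (p : ι → ℤ) (m : ι → ℕ) (hm : ∀ i, m i ≠ 0) (a : Lamp ι) :
    aff p m a ∈ sup H0 ↔ a.v = 0 ∧ ∀ v, a.f v ≠ 0 → (p + fun i => (m i : ℤ) * v i) ∈ H0 := by
  have hinj := aff_inj_aux p m hm
  constructor
  · rintro ⟨h1, h2⟩
    refine ⟨?_, fun v hv => h2 _ ?_⟩
    · funext i
      have := congrFun h1 i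
      exact (mul_eq_zero.1 this).resolve_left (by exact_mod_cast hm i)
    · change (Finsupp.mapDomain _ _) _ ≠ 0
      rw [Finsupp.mapDomain_apply hinj (x := a.f) v]
      exact hv
  · rintro ⟨h1, h2⟩
    refine ⟨?_, fun w hw => ?_⟩
    · funext i
      change (m i : ℤ) * a.v i = 0
      rw [h1]; simp
    · change (Finsupp.mapDomain _ _) _ ≠ 0 at hw
      by_cases hr : w ∈ Set.range (fun v : ι → ℤ => p + fun i => (m i : ℤ) * v i)
      · obtain ⟨v, rfl⟩ := hr
        rw [Finsupp.mapDomain_apply hinj] at hw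
        exact h2 v hw
      · rw [Finsupp.mapDomain_of_notMem_range _ _ hr] at hw
        exact absurd rfl hw

/-- generators -/
noncomputable def x [DecidableEq ι] (i : ι) : Lamp ι := tr (Multiplicative.ofAdd (Pi.single i 1))
/-- lamp generator -/
noncomputable def t : Lamp ι := ⟨Finsupp.single 0 1, 0⟩

theorem xprod_eq [Fintype ι] [DecidableEq ι] (v : ι → ℤ) :
    xprod (x : ι → Lamp ι) v = tr (Multiplicative.ofAdd v) := by
  have := map_xprod (tr (ι := ι)) (fun i => Multiplicative.ofAdd (Pi.single i 1)) v
  have h2 : xprod (fun i : ι => Multiplicative.ofAdd (Pi.single i 1 : ι → ℤ)) v =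
      Multiplicative.ofAdd v := by
    rw [xprod, Finset.prod_map_toList]
    apply Multiplicative.toAdd.injective
    simp only [toAdd_prod, toAdd_zpow, toAdd_ofAdd]
    funext j
    simp [Finset.sum_apply, Pi.single_apply]
  rw [h2] at this
  exact this.symm

theorem tconj_eq [Fintype ι] [DecidableEq ι] (v : ι → ℤ) :
    tconj (x : ι → Lamp ι) t v = ⟨Finsupp.single v 1, 0⟩ := by
  rw [tconj, xprod_eq]
  ext1
  · simp only [mul_f, mul_v, tr, MonoidHom.coe_mk, OneHom.coe_mk, toAdd_ofAdd, t, inv_f, shift_map0, neg_zero,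
      add_zero, zero_add, shift, Finsupp.mapDomain_single, Finsupp.mapDomain_zero]
  · simp [mul_v, tr, t, inv_v]

theorem aff_x [DecidableEq ι] (p : ι → ℤ) (m : ι → ℕ) (i : ι) : aff p m (x i) = x i ^ m i := by
  rw [x, ← map_pow]
  ext1
  · exact Finsupp.mapDomain_zero (f := fun v : ι → ℤ => p + fun i => (m i : ℤ) * v i)
  · funext j
    simp only [aff, tr, MonoidHom.coe_mk, OneHom.coe_mk, toAdd_ofAdd, toAdd_pow, Pi.smul_apply,
      Pi.single_apply, smul_eq_mul, nsmul_eq_mul]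
    by_cases h : j = i
    · subst h; simp
    · simp [h]

theorem aff_t [Fintype ι] [DecidableEq ι] (p : ι → ℤ) (m : ι → ℕ) :
    aff p m t = tconj (x : ι → Lamp ι) t p := by
  rw [tconj_eq]
  ext1
  · simp only [aff, t, MonoidHom.coe_mk, OneHom.coe_mk, Finsupp.mapDomain_single]
    congr 1
    funext i
    simp
  · funext i
    simp [aff, t]

end Lamp

/-- Two infinite co-infinite subsets of countable sets can be matched. -/
theorem exists_equiv_match {T : Type} [Countable T] (T1 : Set T) (h1 : T1.Infinite)
    (h2 : T1ᶜ.Infinite) : ∃ e : ℕ × Bool ≃ T, ∀ n ε, e (n, ε) ∈ T1 ↔ ε = true := by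
  classical
  have : Infinite T1 := h1.to_subtype
  have : Infinite (T1ᶜ : Set T) := h2.to_subtype
  obtain ⟨d1⟩ := nonempty_denumerable T1
  obtain ⟨d2⟩ := nonempty_denumerable (T1ᶜ : Set T)
  let e1 : ℕ ≃ T1 := (Denumerable.eqv T1).symm
  let e2 : ℕ ≃ (T1ᶜ : Set T) := (Denumerable.eqv _).symm
  let F : ℕ × Bool → T := fun x => if x.2 = true then (e1 x.1 : T) else (e2 x.1 : T)
  have hF : Function.Bijective F := by
    constructor
    · rintro ⟨n, ε⟩ ⟨n', ε'⟩ h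
      cases ε <;> cases ε' <;> simp only [F] at h
      · have := e2.injective (Subtype.ext h); rw [this]
      · exfalso
        have h3 := (e2 n).2
        simp only [Bool.false_eq_true, if_false, if_true] at h
        rw [h] at h3
        exact h3 (e1 n').2
      · exfalso
        have h3 := (e2 n').2
        simp only [Bool.false_eq_true, if_false, if_true] at h
        rw [← h] at h3
        exact h3 (e1 n).2
      · have := e1.injective (Subtype.ext h); rw [this]
    · intro y
      by_cases hy : y ∈ T1
      · refine ⟨(e1.symm ⟨y, hy⟩, true), ?_⟩
        simp [F]
      · refine ⟨(e2.symm ⟨y, hy⟩, false), ?_⟩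
        simp [F]
  refine ⟨Equiv.ofBijective F hF, ?_⟩
  intro n ε
  cases ε
  · simp only [Equiv.ofBijective_apply, F, Bool.false_eq_true, if_false, iff_false]
    exact (e2 n).2
  · simp only [Equiv.ofBijective_apply, F, if_true, iff_true]
    exact (e1 n).2

/-- Identification of `G × ℕ × Bool` as a free `A`-set. -/
theorem free_set_model {A G : Type} [Group A] [Group G] [Countable G] (H : Subgroup G) (α : A →* G)
    (hα : Function.Injective α) :
    ∃ Φ : A × (ℕ × Bool) ≃ G × (ℕ × Bool),
      (∀ a b z, Φ (a * b, z) = (α a * (Φ (b, z)).1, (Φ (b, z)).2)) ∧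
      (∀ a n ε, ((Φ (a, n, ε)).1 ∈ H ∧ (Φ (a, n, ε)).2.2 = true) ↔ (α a ∈ H ∧ ε = true)) := by
  classical
  let rel := QuotientGroup.rightRel α.range
  let Q := Quotient rel
  let mk : G → Q := Quotient.mk rel
  have hmk : ∀ x y, mk x = mk y ↔ y * x⁻¹ ∈ α.range := fun x y => by
    simp only [mk]
    rw [Quotient.eq]
    exact QuotientGroup.rightRel_apply
  have hrep : ∀ q : Q, ∃ g, mk g = q ∧ ((∃ h ∈ H, mk h = q) → g ∈ H) := by
    intro q
    by_cases hq : ∃ h ∈ H, mk h = q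
    · obtain ⟨h, hh, e⟩ := hq
      exact ⟨h, e, fun _ => hh⟩
    · obtain ⟨g, hg⟩ := Quotient.exists_rep q
      exact ⟨g, hg, fun h => absurd h hq⟩
  choose rep hrep1 hrep2 using hrep
  have : Countable Q := inferInstanceAs (Countable (Quotient rel))
  let T1 : Set (Q × (ℕ × Bool)) := {x | (∃ h ∈ H, mk h = x.1) ∧ x.2.2 = true}
  obtain ⟨e, he⟩ := exists_equiv_match T1
    (Set.infinite_of_injective_forall_mem (f := fun n : ℕ => ((mk 1, n, true) : Q × (ℕ × Bool)))
      (fun a b h => by simpa using h) (fun n => ⟨⟨1, H.one_mem, rfl⟩, rfl⟩))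
    (Set.infinite_of_injective_forall_mem (f := fun n : ℕ => ((mk 1, n, false) : Q × (ℕ × Bool)))
      (fun a b h => by simpa using h) (fun n h => by simpa using h.2))
  let F : A × (ℕ × Bool) → G × (ℕ × Bool) := fun x => (α x.1 * rep (e x.2).1, (e x.2).2)
  have hmkF : ∀ a q, mk (α a * rep q) = q := by
    intro a q
    conv_rhs => rw [← hrep1 q]
    rw [hmk]
    exact ⟨a⁻¹, by simp⟩
  have hF : Function.Bijective F := by
    constructor
    · rintro ⟨a, z⟩ ⟨a', z'⟩ h
      simp only [F, Prod.mk.injEq] at h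
      have h3 : (e z).1 = (e z').1 := by
        rw [← hmkF a (e z).1, h.1, hmkF]
      have h4 : e z = e z' := Prod.ext h3 h.2
      have h5 := e.injective h4
      subst h5
      have h6 := mul_right_cancel h.1
      rw [hα h6]
    · rintro ⟨g, w⟩
      have : mk (rep (mk g)) = mk g := hrep1 _
      rw [hmk] at this
      obtain ⟨a, ha⟩ := this
      refine ⟨(a, e.symm (mk g, w)), ?_⟩
      simp [F, ha]
  refine ⟨Equiv.ofBijective F hF, ?_, ?_⟩
  · intro a b z
    simp [F, mul_assoc]
  · intro a n ε
    simp only [Equiv.ofBijective_apply, F]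
    have h5 := he n ε
    simp only [T1, Set.mem_setOf_eq] at h5
    constructor
    · rintro ⟨h3, h4⟩
      have hq : ∃ h ∈ H, mk h = (e (n, ε)).1 := ⟨_, h3, hmkF _ _⟩
      refine ⟨?_, h5.1 ⟨hq, h4⟩⟩
      exact (H.mul_mem_cancel_right (hrep2 _ hq)).1 h3
    · rintro ⟨h3, h4⟩
      obtain ⟨hq, h6⟩ := h5.2 h4
      exact ⟨H.mul_mem h3 (hrep2 _ hq), h6⟩

/-- The permutation conjugating one embedding into another. -/
theorem exists_conj_perm {A G : Type} [Group A] [Group G] [Countable G] (H : Subgroup G)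
    (α β : A →* G) (hα : Function.Injective α) (hβ : Function.Injective β)
    (hH : ∀ a, α a ∈ H ↔ β a ∈ H) :
    ∃ τ : Equiv.Perm (G × (ℕ × Bool)),
      (∀ a y, τ (α a * y.1, y.2) = (β a * (τ y).1, (τ y).2)) ∧
      (∀ y, ((τ y).1 ∈ H ∧ (τ y).2.2 = true) ↔ (y.1 ∈ H ∧ y.2.2 = true)) := by
  obtain ⟨Φ, hΦ1, hΦ2⟩ := free_set_model H α hα
  obtain ⟨Ψ, hΨ1, hΨ2⟩ := free_set_model H β hβ
  refine ⟨Φ.symm.trans Ψ, ?_, ?_⟩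
  · intro a y
    obtain ⟨⟨b, z⟩, rfl⟩ := Φ.surjective y
    rw [← hΦ1]
    simp [hΨ1]
  · intro y
    obtain ⟨⟨b, n, ε⟩, rfl⟩ := Φ.surjective y
    simp only [Equiv.trans_apply, Equiv.symm_apply_apply]
    rw [hΨ2, hΦ2, hH]

/-- The flip over a subset. -/
noncomputable def flipS {Y : Type} (S : Set Y) : Equiv.Perm (Y × Bool) := by
  classical
  exact Function.Involutive.toPerm (fun z => (z.1, if z.1 ∈ S then !z.2 else z.2)) (by
    rintro ⟨y, δ⟩
    by_cases h : y ∈ S <;> simp [h])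

theorem flipS_mem {Y : Type} (S : Set Y) {y : Y} (h : y ∈ S) (δ : Bool) :
    flipS S (y, δ) = (y, !δ) := by
  simp [flipS, Function.Involutive.toPerm, h]
theorem flipS_not_mem {Y : Type} (S : Set Y) {y : Y} (h : y ∉ S) (δ : Bool) :
    flipS S (y, δ) = (y, δ) := by
  simp [flipS, Function.Involutive.toPerm, h]

/-- Extension of a permutation. -/
def extP {Y : Type} : Equiv.Perm Y →* Equiv.Perm (Y × Bool) where
  toFun σ := Equiv.prodCongr σ (Equiv.refl _)
  map_one' := rfl
  map_mul' _ _ := rfl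

theorem extP_apply {Y : Type} (σ : Equiv.Perm Y) (y : Y) (δ : Bool) : extP σ (y, δ) = (σ y, δ) := rfl

theorem flipS_comm {Y : Type} (S : Set Y) (σ : Equiv.Perm Y) :
    Commute (flipS S) (extP σ) ↔ ∀ y, σ y ∈ S ↔ y ∈ S := by
  constructor
  · intro h y
    have h1 := DFunLike.congr_fun h.eq (y, true)
    simp only [Equiv.Perm.mul_apply, extP_apply] at h1
    by_cases hy : y ∈ S <;> by_cases hs : σ y ∈ S <;>
      simp_all [flipS_mem, flipS_not_mem, extP_apply]
  · intro h
    change _ * _ = _ * _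
    ext1 ⟨y, δ⟩
    simp only [Equiv.Perm.mul_apply, extP_apply]
    by_cases hy : y ∈ S
    · rw [flipS_mem S hy, flipS_mem S ((h y).2 hy), extP_apply]
    · rw [flipS_not_mem S hy, flipS_not_mem S (fun h' => hy ((h y).1 h')), extP_apply]

/-- Left multiplication. -/
def lmul {G : Type} [Group G] : G →* Equiv.Perm (G × (ℕ × Bool)) where
  toFun g := Equiv.prodCongr (Equiv.mulLeft g) (Equiv.refl _)
  map_one' := by ext1 ⟨y, z⟩; simp
  map_mul' a b := by ext1 ⟨y, z⟩; simp [mul_assoc]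

theorem lmul_apply {G : Type} [Group G] (g : G) (y) : lmul g y = (g * y.1, y.2) := rfl

theorem AffSys.backward {ι J : Type} [Fintype ι] (A : AffSys ι J) (H0 : Set (ι → ℤ))
    (v0 v : ι → ℤ) (hv0 : v0 ∈ H0) (hv : v ∉ H0) (hA : ∀ j u, A.src j u ∈ H0 ↔ A.tgt j u ∈ H0) :
    ∃ (G : Type) (_ : Group G) (x : ι → G) (t k : G) (r : J → G), A.Rels v0 x t k r ∧
      k * tconj x t v * k⁻¹ * (tconj x t v)⁻¹ ≠ 1 := by
  classical
  let H := Lamp.sup H0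
  have hτ : ∀ j, ∃ τ : Equiv.Perm (Lamp ι × (ℕ × Bool)),
      (∀ a y, τ (Lamp.aff (A.p j) (A.m j) a * y.1, y.2) =
        (Lamp.aff (A.q j) (A.m' j) a * (τ y).1, (τ y).2)) ∧
      (∀ y, ((τ y).1 ∈ H ∧ (τ y).2.2 = true) ↔ (y.1 ∈ H ∧ y.2.2 = true)) := by
    intro j
    apply exists_conj_perm H _ _ (Lamp.aff_injective _ _ (A.hm j)) (Lamp.aff_injective _ _ (A.hm' j))
    intro a
    rw [Lamp.aff_mem_sup _ _ _ (A.hm j), Lamp.aff_mem_sup _ _ _ (A.hm' j)]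
    refine and_congr Iff.rfl (forall_congr' fun u => imp_congr Iff.rfl ?_)
    exact hA j u
  choose τ hτ1 hτ2 using hτ
  let S : Set (Lamp ι × (ℕ × Bool)) := {y | y.1 ∈ H ∧ y.2.2 = true}
  let E : Lamp ι →* Equiv.Perm ((Lamp ι × (ℕ × Bool)) × Bool) := extP.comp lmul
  have hconj : ∀ j a, extP (τ j) * E (Lamp.aff (A.p j) (A.m j) a) * (extP (τ j))⁻¹ =
      E (Lamp.aff (A.q j) (A.m' j) a) := by
    intro j a
    rw [mul_inv_eq_iff_eq_mul]
    simp only [E, MonoidHom.comp_apply, ← map_mul]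
    congr 1
    ext1 y
    simp only [Equiv.Perm.mul_apply, lmul_apply, hτ1]
  have htc : ∀ w, tconj (fun i => E (Lamp.x i)) (E Lamp.t) w = E (tconj Lamp.x Lamp.t w) := fun w =>
    (map_tconj E _ _ w).symm
  have hcomm : ∀ g : Lamp ι, Commute (flipS S) (E g) ↔ g ∈ H := by
    intro g
    simp only [E, MonoidHom.comp_apply]
    rw [flipS_comm]
    constructor
    · intro h
      have := (h (1, 0, true)).2 ⟨H.one_mem, rfl⟩
      have h2 : g * 1 ∈ H := this.1
      simpa using h2
    · intro h y
      simp only [S, Set.mem_setOf_eq, lmul_apply]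
      rw [H.mul_mem_cancel_left h]
  have htm : ∀ w, tconj (Lamp.x : ι → Lamp ι) Lamp.t w ∈ H ↔ w ∈ H0 := by
    intro w
    rw [Lamp.tconj_eq]
    constructor
    · intro h
      exact h.2 w (by simp)
    · intro h
      refine ⟨rfl, fun u hu => ?_⟩
      by_cases huw : u = w
      · rw [huw]; exact h
      · exact absurd (Finsupp.single_eq_of_ne huw) hu
  refine ⟨_, inferInstance, fun i => E (Lamp.x i), E Lamp.t, flipS S, fun j => extP (τ j),
    ⟨?_, ?_, ?_, ?_, ?_⟩, ?_⟩
  · intro i j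
    simp only [Lamp.x, ← map_mul, ← map_inv]
    rw [mul_comm, mul_assoc]
    simp
  · intro j i
    rw [mul_inv_eq_one, ← map_pow, ← map_pow, ← Lamp.aff_x (A.p j), ← Lamp.aff_x (A.q j), hconj]
  · intro j
    rw [mul_inv_eq_one, htc, htc, ← Lamp.aff_t _ (A.m j), ← Lamp.aff_t _ (A.m' j), hconj]
  · intro j
    rw [mul_inv_eq_one, mul_inv_eq_iff_eq_mul]
    exact ((flipS_comm S (τ j)).2 (hτ2 j)).eq
  · rw [mul_inv_eq_one, mul_inv_eq_iff_eq_mul, htc]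
    exact ((hcomm _).2 ((htm _).2 hv0)).eq
  · rw [htc, Ne, mul_inv_eq_one, mul_inv_eq_iff_eq_mul]
    intro h
    exact hv ((htm _).1 ((hcomm _).1 h))

namespace AffSys
variable {ι J : Type} [Fintype ι] (A : AffSys ι J)

/-- generator names -/
abbrev GenT (ι J : Type) := (ι ⊕ J) ⊕ Bool

/-- generators `x` -/
def fx (i : ι) : FreeGroup (GenT ι J) := FreeGroup.of (Sum.inl (Sum.inl i))
/-- generators `r` -/
def fr (j : J) : FreeGroup (GenT ι J) := FreeGroup.of (Sum.inl (Sum.inr j))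
/-- generator `t` -/
def ft : FreeGroup (GenT ι J) := FreeGroup.of (Sum.inr true)
/-- generator `k` -/
def fk : FreeGroup (GenT ι J) := FreeGroup.of (Sum.inr false)

/-- The relators. -/
noncomputable def relators (v0 : ι → ℤ) : Set (FreeGroup (GenT ι J)) :=
  Set.range (fun z : ι × ι => fx z.1 * fx z.2 * (fx z.1)⁻¹ * (fx z.2)⁻¹) ∪
  Set.range (fun z : J × ι => fr z.1 * fx z.2 ^ A.m z.1 z.2 * (fr z.1)⁻¹ * (fx z.2 ^ A.m' z.1 z.2)⁻¹) ∪
  Set.range (fun j => fr j * tconj fx ft (A.p j) * (fr j)⁻¹ * (tconj fx ft (A.q j))⁻¹) ∪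
  Set.range (fun j => fk * fr j * fk⁻¹ * (fr j)⁻¹) ∪
  {fk * tconj fx ft v0 * fk⁻¹ * (tconj fx ft v0)⁻¹}

theorem relators_finite [Finite J] (v0 : ι → ℤ) : (A.relators v0).Finite :=
  ((((Set.finite_range _).union (Set.finite_range _)).union (Set.finite_range _)).union
    (Set.finite_range _)).union (Set.finite_singleton _)

theorem rels_iff {G : Type*} [Group G] (φ : FreeGroup (GenT ι J) →* G) (v0 : ι → ℤ) :
    (∀ r ∈ A.relators v0, φ r = 1) ↔
      A.Rels v0 (fun i => φ (fx i)) (φ ft) (φ fk) (fun j => φ (fr j)) := by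
  constructor
  · intro h
    refine ⟨?_, ?_, ?_, ?_, ?_⟩
    · intro i j
      have := h _ (Or.inl (Or.inl (Or.inl (Or.inl ⟨(i, j), rfl⟩))))
      simpa using this
    · intro j i
      have := h _ (Or.inl (Or.inl (Or.inl (Or.inr ⟨(j, i), rfl⟩))))
      simpa using this
    · intro j
      have := h _ (Or.inl (Or.inl (Or.inr ⟨j, rfl⟩)))
      simpa [map_tconj] using this
    · intro j
      have := h _ (Or.inl (Or.inr ⟨j, rfl⟩))
      simpa using this
    · have := h _ (Or.inr rfl)
      simpa [map_tconj] using this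
  · rintro ⟨h1, h2, h3, h4, h5⟩
    rintro r ((((⟨z, rfl⟩ | ⟨z, rfl⟩) | ⟨j, rfl⟩) | ⟨j, rfl⟩) | rfl)
    · simpa using h1 z.1 z.2
    · simpa using h2 z.1 z.2
    · simpa [map_tconj] using h3 j
    · simpa using h4 j
    · simpa [map_tconj] using h5

/-- The test word. -/
noncomputable def testW (g : FreeGroup (GenT ι J)) : FreeGroup (GenT ι J) :=
  fk * (g * ft * g⁻¹) * fk⁻¹ * (g * ft * g⁻¹)⁻¹

theorem testW_mem [DecidableEq ι] (v0 c0 : ι → ℤ) (i0 : ι) (N : ℕ)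
    (hinv : ∀ j u, Relation.ReflTransGen A.Step (A.src j u) v0 ↔
      Relation.ReflTransGen A.Step (A.tgt j u) v0) :
    testW (xprod fx c0 * fx i0 ^ N) ∈ Subgroup.normalClosure (A.relators v0) ↔
      Relation.ReflTransGen A.Step (c0 + Pi.single i0 (N : ℤ)) v0 := by
  have key : ∀ {G : Type} [Group G] (φ : FreeGroup (GenT ι J) →* G),
      A.Rels v0 (fun i => φ (fx i)) (φ ft) (φ fk) (fun j => φ (fr j)) →
      φ (testW (xprod fx c0 * fx i0 ^ N)) = φ fk *
        tconj (fun i => φ (fx i)) (φ ft) (c0 + Pi.single i0 (N : ℤ)) * (φ fk)⁻¹ *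
        (tconj (fun i => φ (fx i)) (φ ft) (c0 + Pi.single i0 (N : ℤ)))⁻¹ := by
    intro G _ φ h
    have hx : ∀ i j, Commute (φ (fx i)) (φ (fx j)) := fun i j => by
      have := h.comm i j
      rw [mul_inv_eq_one, mul_inv_eq_iff_eq_mul] at this
      exact this
    have h1 : xprod (fun i => φ (fx i)) (Pi.single i0 (N : ℤ)) = φ (fx i0) ^ N := by
      have : ∀ l : List ι, l.Nodup → (l.map fun i => φ (fx i) ^ (Pi.single i0 (N : ℤ) : ι → ℤ) i).prod =
          if i0 ∈ l then φ (fx i0) ^ N else 1 := by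
        intro l
        induction l with
        | nil => simp
        | cons i l ih =>
          intro hl
          rw [List.nodup_cons] at hl
          rw [List.map_cons, List.prod_cons, ih hl.2]
          by_cases hi : i = i0
          · subst hi
            simp [hl.1]
          · simp [hi, Ne.symm hi]
      have h2 := this Finset.univ.toList (Finset.nodup_toList _)
      rw [xprod, h2]; simp
    have h3 : φ (xprod fx c0 * fx i0 ^ N) = xprod (fun i => φ (fx i)) (c0 + Pi.single i0 (N : ℤ)) := by
      rw [xprod_add _ hx, h1, map_mul, map_xprod, map_pow]
    simp only [testW, map_mul φ fk, map_mul, map_inv, tconj, ← h3]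
  constructor
  · intro h
    by_contra hv
    obtain ⟨G, _, x, t, k, r, hR, hne⟩ := A.backward {v | Relation.ReflTransGen A.Step v v0} v0
      (c0 + Pi.single i0 (N : ℤ)) Relation.ReflTransGen.refl hv hinv
    let φ : FreeGroup (GenT ι J) →* G :=
      FreeGroup.lift (Sum.elim (Sum.elim x r) (fun b => if b then t else k))
    have e1 : (fun i => φ (fx i)) = x := by funext i; simp [φ, fx]
    have e2 : (fun j => φ (fr j)) = r := by funext i; simp [φ, fr]
    have e3 : φ ft = t := by simp [φ, ft]
    have e4 : φ fk = k := by simp [φ, fk]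
    have hR' : A.Rels v0 (fun i => φ (fx i)) (φ ft) (φ fk) (fun j => φ (fr j)) := by
      rw [e1, e2, e3, e4]; exact hR
    have h5 := (A.rels_iff φ v0).2 hR'
    have h6 : Subgroup.normalClosure (A.relators v0) ≤ φ.ker :=
      Subgroup.normalClosure_le_normal h5
    have h7 : φ (testW (xprod fx c0 * fx i0 ^ N)) = 1 := h6 h
    rw [key φ hR', e1, e3, e4] at h7
    exact hne h7
  · intro h
    let φ := PresentedGroup.mk (A.relators v0)
    have h5 : A.Rels v0 (fun i => φ (fx i)) (φ ft) (φ fk) (fun j => φ (fr j)) :=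
      (A.rels_iff φ v0).1 (fun r hr => PresentedGroup.one_of_mem hr)
    have h6 := key φ h5
    rw [h5.forward h] at h6
    exact PresentedGroup.mk_eq_one_iff.1 h6

end AffSys

/-- Families of free group elements with computable words. -/
def CW (g : ℕ → FreeGroup (Fin 2)) : Prop :=
  ∃ w : ℕ → List (Fin 2 × Bool), Computable w ∧ ∀ n, FreeGroup.mk (w n) = g n

theorem CW.const (g : FreeGroup (Fin 2)) : CW (fun _ => g) :=
  ⟨fun _ => g.toWord, Computable.const _, fun _ => FreeGroup.mk_toWord⟩

theorem CW.mul {g h : ℕ → FreeGroup (Fin 2)} (hg : CW g) (hh : CW h) : CW (fun n => g n * h n) := by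
  obtain ⟨w, hw, e⟩ := hg
  obtain ⟨w', hw', e'⟩ := hh
  refine ⟨fun n => w n ++ w' n, ?_, fun n => ?_⟩
  · exact Computable.list_append.comp hw hw'
  · rw [← FreeGroup.mul_mk, e, e']

theorem CW.inv {g : ℕ → FreeGroup (Fin 2)} (hg : CW g) : CW (fun n => (g n)⁻¹) := by
  obtain ⟨w, hw, e⟩ := hg
  refine ⟨fun n => FreeGroup.invRev (w n), ?_, fun n => ?_⟩
  · have : Primrec (fun l : List (Fin 2 × Bool) => FreeGroup.invRev l) := by
      apply Primrec.list_reverse.comp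
      apply Primrec.list_map Primrec.id
      have h : Primrec (fun x : Fin 2 × Bool => (x.1, !x.2)) :=
        Primrec.pair Primrec.fst (Primrec.not.comp Primrec.snd)
      exact (h.comp Primrec.snd).to₂
    exact this.to_comp.comp hw
  · rw [← FreeGroup.inv_mk, e]

theorem CW.pow (g : FreeGroup (Fin 2)) {N : ℕ → ℕ} (hN : Computable N) : CW (fun n => g ^ N n) := by
  have : Primrec (fun n : ℕ => (Nat.rec [] (fun _ acc => g.toWord ++ acc) n : List (Fin 2 × Bool))) := by
    apply Primrec.nat_rec₁
    exact (Primrec.list_append.comp (Primrec.const _) Primrec.snd).to₂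
  refine ⟨_, this.to_comp.comp hN, fun n => ?_⟩
  simp only
  induction N n with
  | zero => rw [pow_zero]; rfl
  | succ k ih => rw [pow_succ', ← ih, ← FreeGroup.mul_mk, FreeGroup.mk_toWord]

theorem main_reduction {ι J : Type} [Fintype ι] [DecidableEq ι] [Finite J] (A : AffSys ι J)
    (v0 c0 : ι → ℤ) (i0 : ι) (N : ℕ → ℕ) (hN : Computable N)
    (hinv : ∀ j u, Relation.ReflTransGen A.Step (A.src j u) v0 ↔
      Relation.ReflTransGen A.Step (A.tgt j u) v0)
    (K : ℕ → Prop) (hK : ∀ n, K n ↔ Relation.ReflTransGen A.Step (c0 + Pi.single i0 (N n : ℤ)) v0)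
    (hre : ∃ g : ℕ →. Unit, Partrec g ∧ ∀ n, K n ↔ (g n).Dom) (hnr : ¬ ComputablePred K) :
    ∃ (c : ℕ) (f : ℕ → List (List (Fin 2 × Bool))),
      Computable f ∧
      (∀ n : ℕ, (wordsSet (f n)).ncard = c) ∧
      (∀ n : ℕ, Monoid.IsTorsion (Abelianization (PresentedGroup (wordsSet (f n))))) ∧
      (∀ n : ℕ, Subsingleton (PresentedGroup (wordsSet (f n))) ∨
        Infinite (PresentedGroup (wordsSet (f n)))) ∧
      (∃ g : ℕ →. Unit, Partrec g ∧
        ∀ n : ℕ, Subsingleton (PresentedGroup (wordsSet (f n))) ↔ (g n).Dom) ∧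
      ¬ ComputablePred (fun n : ℕ => Subsingleton (PresentedGroup (wordsSet (f n)))) := by
  obtain ⟨num, hnum⟩ := exists_injective_nat (AffSys.GenT ι J)
  let R := A.relators v0
  have hRf : R.Finite := A.relators_finite v0
  let W : ℕ → FreeGroup (AffSys.GenT ι J) := fun n =>
    AffSys.testW (xprod AffSys.fx c0 * AffSys.fx i0 ^ N n)
  have hW : CW (fun n => encHom num (W n)) := by
    have h1 : CW (fun n => encHom num (xprod AffSys.fx c0) * (encHom num (AffSys.fx i0)) ^ N n) :=
      (CW.const _).mul (CW.pow _ hN)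
    have h2 := (h1.mul (CW.const (encHom num AffSys.ft))).mul h1.inv
    have h3 := (((CW.const (encHom num AffSys.fk)).mul h2).mul
      (CW.const (encHom num AffSys.fk)⁻¹)).mul h2.inv
    simpa [W, AffSys.testW] using h3
  have c1 : CW (fun n => wR1 gA gB gC (encHom num (W n))) :=
    (((CW.const _).mul hW).mul (CW.const _)).mul (CW.const _)
  have c2 : CW (fun n => wR2 gA gB gC (encHom num (W n))) :=
    (((CW.const _).mul hW).mul (CW.const _)).mul (CW.const _)
  have c3 : CW (fun n => wR3 gA gB gC (encHom num (W n))) :=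
    (((CW.const _).mul hW).mul (CW.const _)).mul (CW.const _)
  obtain ⟨w1, hw1, e1⟩ := c1
  obtain ⟨w2, hw2, e2⟩ := c2.mul c3
  obtain ⟨w3, hw3, e3⟩ := c3
  let base : List (List (Fin 2 × Bool)) := (hRf.image (encHom num)).toFinset.toList.map FreeGroup.toWord
  let f : ℕ → List (List (Fin 2 × Bool)) := fun n => [w1 n, w2 n, w3 n] ++ base
  have hf : Computable f := by
    apply Computable.list_append.comp _ (Computable.const _)
    exact Computable.list_cons.comp hw1 (Computable.list_cons.comp hw2
      (Computable.list_cons.comp hw3 (Computable.const _)))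
  have hset : ∀ n, wordsSet (f n) = relSet num R (W n) := by
    intro n
    ext z
    simp only [relSet, wordsSet, f, base, Set.mem_union, Set.mem_insert_iff, Set.mem_singleton_iff,
      Set.mem_ofPred_eq, List.mem_append, List.mem_cons, List.mem_map, Finset.mem_toList,
      Set.Finite.mem_toFinset, List.not_mem_nil, or_false]
    constructor
    · rintro ⟨l, (rfl | rfl | rfl) | ⟨y, hy, rfl⟩, rfl⟩
      · rw [e1]; right; left; rfl
      · rw [e2]; right; right; left; rfl
      · rw [e3]; right; right; right; rfl
      · left; rw [FreeGroup.mk_toWord]; exact hy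
    · rintro (h | rfl | rfl | rfl)
      · exact ⟨_, Or.inr ⟨z, h, rfl⟩, FreeGroup.mk_toWord.symm⟩
      · exact ⟨_, Or.inl (Or.inl rfl), (e1 n).symm⟩
      · exact ⟨_, Or.inl (Or.inr (Or.inl rfl)), (e2 n).symm⟩
      · exact ⟨_, Or.inl (Or.inr (Or.inr rfl)), (e3 n).symm⟩
  have hmem : ∀ n, W n ∈ Subgroup.normalClosure R ↔ K n := fun n => by
    rw [hK]
    exact A.testW_mem v0 c0 i0 (N n) hinv
  have htriv : ∀ n, Subsingleton (PresentedGroup (wordsSet (f n))) ↔ K n := by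
    intro n
    rw [hset, ← hmem]
    constructor
    · intro h
      by_contra hn
      have := rel_infinite num hnum R (W n) hn
      exact not_finite (PresentedGroup (relSet num R (W n)))
    · exact rel_trivial num R (W n)
  refine ⟨(encHom num '' R).ncard + 3, f, hf, ?_, ?_, ?_, ?_, ?_⟩
  · intro n
    rw [hset, rel_ncard num R hRf]
  · intro n
    rw [hset]
    exact rel_torsion num R (W n)
  · intro n
    rw [hset]
    by_cases h : W n ∈ Subgroup.normalClosure R
    · exact Or.inl (rel_trivial num R (W n) h)
    · exact Or.inr (rel_infinite num hnum R (W n) h)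
  · obtain ⟨g, hg, hgd⟩ := hre
    exact ⟨g, hg, fun n => (htriv n).trans (hgd n)⟩
  · intro h
    apply hnr
    have : K = (fun n : ℕ => Subsingleton (PresentedGroup (wordsSet (f n)))) := by
      funext n
      exact propext (htriv n).symm
    rw [this]
    exact h

/-- A machine acting on digits of numbers in base five. -/
structure DigM (Q K : Type) where
  /-- which register is read -/
  κ : Q → K
  /-- next state -/
  δ : Q → Fin 5 → Q
  /-- new offset -/
  c : Q → Fin 5 → ℕ
  /-- new multiplier -/
  μ : Q → Fin 5 → ℕ
  hμ : ∀ q d, μ q d ≠ 0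

namespace DigM
variable {Q K : Type} [DecidableEq K] (M : DigM Q K)

/-- lowest digit -/
def dg (n : ℕ) : Fin 5 := ⟨n % 5, Nat.mod_lt _ (by norm_num)⟩

/-- One step of the digit machine. -/
def nxt (x : Q × (K → ℕ)) : Q × (K → ℕ) :=
  (M.δ x.1 (dg (x.2 (M.κ x.1))), Function.update x.2 (M.κ x.1)
    (M.c x.1 (dg (x.2 (M.κ x.1))) + M.μ x.1 (dg (x.2 (M.κ x.1))) * (x.2 (M.κ x.1) / 5)))

variable [Fintype Q]

/-- The number of a state. -/
noncomputable def nm (q : Q) : ℕ := (Fintype.equivFin Q q : ℕ)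

theorem nm_lt (q : Q) : nm q < Fintype.card Q := (Fintype.equivFin Q q).2
theorem nm_inj {q q' : Q} (h : nm q = nm q') : q = q' :=
  (Fintype.equivFin Q).injective (Fin.ext h)

/-- The affine system. -/
noncomputable def toAff : AffSys (Option K) (Q × Fin 5) where
  p j := fun o => o.elim (nm j.1 : ℤ) (fun k => if k = M.κ j.1 then (j.2.val : ℤ) else 0)
  q j := fun o => o.elim (nm (M.δ j.1 j.2) : ℤ) (fun k => if k = M.κ j.1 then (M.c j.1 j.2 : ℤ) else 0)
  m j := fun o => o.elim (Fintype.card Q) (fun k => if k = M.κ j.1 then 5 else 1)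
  m' j := fun o => o.elim (Fintype.card Q) (fun k => if k = M.κ j.1 then M.μ j.1 j.2 else 1)
  hm j i := by
    have : Nonempty Q := ⟨j.1⟩
    cases i with
    | none => exact Fintype.card_ne_zero
    | some k => simp only [Option.elim_some]; split_ifs <;> norm_num
  hm' j i := by
    have : Nonempty Q := ⟨j.1⟩
    cases i with
    | none => exact Fintype.card_ne_zero
    | some k =>
      simp only [Option.elim_some]; split_ifs
      · exact M.hμ _ _
      · norm_num

/-- Encoding of a configuration as a vector. -/
noncomputable def enc (x : Q × (K → ℕ)) : Option K → ℤ := fun o => o.elim (nm x.1 : ℤ) (fun k => (x.2 k : ℤ))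

theorem enc_inj {x y : Q × (K → ℕ)} (h : enc x = enc y) : x = y := by
  refine Prod.ext ?_ ?_
  · have := congrFun h none
    simp only [enc, Option.elim_none, Nat.cast_inj] at this
    exact nm_inj this
  · funext k
    have := congrFun h (some k)
    simpa only [enc, Option.elim_some, Nat.cast_inj] using this

theorem emod_unique {N a b : ℕ} {u w : ℤ} (ha : a < N) (hb : b < N)
    (h : (a : ℤ) + N * u = b + N * w) : a = b := by
  have h1 : ((a : ℤ) + N * u) % N = a := by
    rw [Int.add_mul_emod_self_left]; exact Int.emod_eq_of_lt (by omega) (by omega)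
  have h2 : ((b : ℤ) + N * w) % N = b := by
    rw [Int.add_mul_emod_self_left]; exact Int.emod_eq_of_lt (by omega) (by omega)
  rw [h, h2] at h1
  exact_mod_cast h1.symm

theorem src_inj {j j' : Q × Fin 5} {u u' : Option K → ℤ} (h : M.toAff.src j u = M.toAff.src j' u') :
    j = j' ∧ u = u' := by
  obtain ⟨q, d⟩ := j
  obtain ⟨q', d'⟩ := j'
  have h0 := congrFun h none
  simp only [AffSys.src, toAff, Pi.add_apply, Option.elim_none] at h0
  have hq : q = q' := nm_inj (emod_unique (nm_lt q) (nm_lt q') h0)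
  subst hq
  have h1 := congrFun h (some (M.κ q))
  simp only [AffSys.src, toAff, Pi.add_apply, Option.elim_some, if_true] at h1
  have hd : d.val = d'.val := emod_unique d.2 d'.2 h1
  have hd' : d = d' := Fin.ext hd
  subst hd'
  exact ⟨rfl, Lamp.aff_inj_aux _ _ (M.toAff.hm (q, d)) h⟩

theorem step_det {v w w' : Option K → ℤ} (h : M.toAff.Step v w) (h' : M.toAff.Step v w') : w = w' := by
  obtain ⟨j, u, rfl, rfl⟩ := h
  obtain ⟨j', u', e, rfl⟩ := h'
  obtain ⟨rfl, rfl⟩ := M.src_inj e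
  rfl

theorem step_enc (x : Q × (K → ℕ)) : M.toAff.Step (enc x) (enc (M.nxt x)) := by
  obtain ⟨q, S⟩ := x
  refine ⟨(q, dg (S (M.κ q))), fun o => o.elim 0 (fun k => if k = M.κ q then (S k / 5 : ℕ) else (S k : ℤ)),
    ?_, ?_⟩
  · funext o
    cases o with
    | none => simp [AffSys.src, toAff, enc]
    | some k =>
      by_cases hk : k = M.κ q
      · subst hk
        simp only [AffSys.src, toAff, enc, Pi.add_apply, Option.elim_some, if_true, dg]
        exact_mod_cast (Nat.mod_add_div _ 5).symm
      · simp [AffSys.src, toAff, enc, hk]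
  · funext o
    cases o with
    | none => simp [AffSys.tgt, toAff, enc, nxt]
    | some k =>
      by_cases hk : k = M.κ q
      · subst hk
        simp [AffSys.tgt, toAff, enc, nxt]
      · simp [AffSys.tgt, toAff, enc, nxt, hk]

theorem inv_of_fixed (x0 : Q × (K → ℕ)) (h0 : M.nxt x0 = x0) (j u) :
    Relation.ReflTransGen M.toAff.Step (M.toAff.src j u) (enc x0) ↔
      Relation.ReflTransGen M.toAff.Step (M.toAff.tgt j u) (enc x0) := by
  have hs : M.toAff.Step (M.toAff.src j u) (M.toAff.tgt j u) := ⟨j, u, rfl, rfl⟩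
  constructor
  · intro h
    rcases Relation.ReflTransGen.cases_head h with h | ⟨w, hw, h⟩
    · have h1 := M.step_enc x0
      rw [h0, ← h] at h1
      rw [M.step_det hs h1, h]
    · rw [M.step_det hs hw]; exact h
  · intro h
    exact Relation.ReflTransGen.head hs h

/-- Reachability transfers. -/
theorem reach_enc (x y : Q × (K → ℕ)) : Relation.ReflTransGen M.toAff.Step (enc x) (enc y) ↔
    Relation.ReflTransGen (fun a b => b = M.nxt a) x y := by
  constructor
  · intro h
    have : ∀ v, Relation.ReflTransGen M.toAff.Step (enc x) v →
        ∃ z, v = enc z ∧ Relation.ReflTransGen (fun a b => b = M.nxt a) x z := by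
      intro v hv
      induction hv with
      | refl => exact ⟨x, rfl, Relation.ReflTransGen.refl⟩
      | tail _ hs ih =>
        obtain ⟨z, rfl, hz⟩ := ih
        exact ⟨M.nxt z, M.step_det hs (M.step_enc z), hz.tail rfl⟩
    obtain ⟨z, hz, hr⟩ := this _ h
    rw [enc_inj hz]; exact hr
  · intro h
    induction h with
    | refl => exact Relation.ReflTransGen.refl
    | tail _ hs ih => subst hs; exact ih.tail (M.step_enc _)

end DigM

namespace StkM
open Turing Turing.PartrecToTM2

/-- Statements of the machine. -/
abbrev St := TM2.Stmt (fun _ : K' => Γ') Λ' (Option Γ')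
abbrev Sk := K' → List Γ'
noncomputable def prog : Λ' → St := tr

/-- Digit of a symbol. -/
def dig : Γ' → ℕ
  | Γ'.consₗ => 1
  | Γ'.cons => 2
  | Γ'.bit0 => 3
  | Γ'.bit1 => 4

/-- Symbol of a digit. -/
def hd (d : ℕ) : Option Γ' :=
  if d = 1 then some Γ'.consₗ else if d = 2 then some Γ'.cons else
    if d = 3 then some Γ'.bit0 else if d = 4 then some Γ'.bit1 else none

/-- Encoding of a stack. -/
def encS : List Γ' → ℕ
  | [] => 0
  | a :: l => dig a + 5 * encS l

theorem encS_mod (a : Γ') (l : List Γ') : encS (a :: l) % 5 = dig a := by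
  cases a <;> simp [encS, dig, Nat.add_mod]
theorem encS_div (a : Γ') (l : List Γ') : encS (a :: l) / 5 = encS l := by
  cases a <;> simp only [encS, dig] <;> omega
theorem encS_hd (L : List Γ') : hd (encS L % 5) = L.head? := by
  cases L with
  | nil => rfl
  | cons a l => rw [encS_mod]; cases a <;> rfl

/-- Stack used. -/
def kap : St → K'
  | TM2.Stmt.push k _ _ => k
  | TM2.Stmt.peek k _ _ => k
  | TM2.Stmt.pop k _ _ => k
  | _ => K'.main

noncomputable def nx : St → Option Γ' → Option Γ' → St × Option Γ'
  | TM2.Stmt.push _ _ q, v, _ => (q, v)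
  | TM2.Stmt.peek _ f q, v, o => (q, f v o)
  | TM2.Stmt.pop _ f q, v, o => (q, f v o)
  | TM2.Stmt.load a q, v, _ => (q, a v)
  | TM2.Stmt.branch f q₁ q₂, v, _ => (cond (f v) q₁ q₂, v)
  | TM2.Stmt.goto f, v, _ => (prog (f v), v)
  | TM2.Stmt.halt, v, _ => (TM2.Stmt.halt, v)

/-- New stack. -/
def nl : St → Option Γ' → List Γ' → List Γ'
  | TM2.Stmt.push _ f _, v, L => f v :: L
  | TM2.Stmt.pop _ _ _, _, L => L.tail
  | _, _, L => L

/-- offset -/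
def cc : St → Option Γ' → ℕ → ℕ
  | TM2.Stmt.push _ f _, v, d => dig (f v) + 5 * d
  | TM2.Stmt.pop _ _ _, _, _ => 0
  | _, _, d => d

/-- multiplier -/
def mm : St → ℕ → ℕ
  | TM2.Stmt.push _ _ _, _ => 25
  | TM2.Stmt.pop _ _ _, d => if d = 0 then 5 else 1
  | _, _ => 5

theorem mm_ne (q : St) (d : ℕ) : mm q d ≠ 0 := by
  cases q <;> simp only [mm] <;> try split_ifs <;> norm_num
  all_goals norm_num

theorem enc_nl (q : St) (v : Option Γ') (L : List Γ') :
    encS (nl q v L) = cc q v (encS L % 5) + mm q (encS L % 5) * (encS L / 5) := by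
  have h := Nat.mod_add_div (encS L) 5
  cases q with
  | push k f q => simp only [nl, cc, mm, encS]; omega
  | pop k f q =>
    cases L with
    | nil => simp [nl, cc, mm, encS]
    | cons a l =>
      rw [encS_div, encS_mod]
      have : dig a ≠ 0 := by cases a <;> simp [dig]
      simp [nl, cc, mm, this]
  | _ => simp only [nl, cc, mm]; omega

/-- Small step. -/
noncomputable def ss (x : (St × Option Γ') × Sk) : (St × Option Γ') × Sk :=
  (nx x.1.1 x.1.2 (x.2 (kap x.1.1)).head?,
    Function.update x.2 (kap x.1.1) (nl x.1.1 x.1.2 (x.2 (kap x.1.1))))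

/-- Big configuration of a small configuration. -/
noncomputable def big (x : (St × Option Γ') × Sk) : Cfg' := TM2.stepAux x.1.1 x.1.2 x.2

/-- The step function. -/
noncomputable def stp : Cfg' → Option Cfg' := TM2.step prog

theorem big_ss (x : (St × Option Γ') × Sk) :
    StateTransition.Reaches stp (big x) (big (ss x)) := by
  obtain ⟨⟨q, v⟩, S⟩ := x
  cases q with
  | push k f q => exact Relation.ReflTransGen.refl
  | peek k f q =>
    have : big (ss ((TM2.Stmt.peek k f q, v), S)) = big ((TM2.Stmt.peek k f q, v), S) := by
      simp [big, ss, nx, nl, kap]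
      rfl
    rw [this]
    exact Relation.ReflTransGen.refl
  | pop k f q => exact Relation.ReflTransGen.refl
  | load a q =>
    have : big (ss ((TM2.Stmt.load a q, v), S)) = big ((TM2.Stmt.load a q, v), S) := by
      simp [big, ss, nx, nl, kap]
      rfl
    rw [this]
    exact Relation.ReflTransGen.refl
  | branch f q₁ q₂ =>
    have : big (ss ((TM2.Stmt.branch f q₁ q₂, v), S)) = big ((TM2.Stmt.branch f q₁ q₂, v), S) := by
      cases h : f v <;> simp [big, ss, nx, nl, kap, h] <;> rfl
    rw [this]
    exact Relation.ReflTransGen.refl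
  | goto f =>
    apply Relation.ReflTransGen.single
    have : ss ((TM2.Stmt.goto f, v), S) = ((prog (f v), v), S) := by
      simp [ss, nx, nl, kap]
    rw [this]
    simp only [big, stp]
    rfl
  | halt =>
    have : ss ((TM2.Stmt.halt, v), S) = ((TM2.Stmt.halt, v), S) := by
      simp [ss, nx, nl, kap]
    rw [this]
    exact Relation.ReflTransGen.refl

/-- small step reachability -/
abbrev SR := Relation.ReflTransGen (fun a b : (St × Option Γ') × Sk => b = ss a)

/-- Entry configuration of a big configuration. -/
noncomputable def sm (c : Cfg') : (St × Option Γ') × Sk :=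
  ((c.l.elim TM2.Stmt.halt prog, c.var), c.stk)

theorem sr_stmt (q : St) (v : Option Γ') (S : Sk) : SR ((q, v), S) (sm (TM2.stepAux q v S)) := by
  induction q generalizing v S with
  | push k f q ih =>
    refine Relation.ReflTransGen.head rfl ?_
    exact ih _ _
  | peek k f q ih =>
    refine Relation.ReflTransGen.head rfl ?_
    have : ss ((TM2.Stmt.peek k f q, v), S) = ((q, f v (S k).head?), S) := by
      simp [ss, nx, nl, kap]
    rw [this]
    exact ih _ _
  | pop k f q ih =>
    refine Relation.ReflTransGen.head rfl ?_
    exact ih _ _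
  | load a q ih =>
    refine Relation.ReflTransGen.head rfl ?_
    have : ss ((TM2.Stmt.load a q, v), S) = ((q, a v), S) := by
      simp [ss, nx, nl, kap]
    rw [this]
    exact ih _ _
  | branch f q₁ q₂ ih₁ ih₂ =>
    refine Relation.ReflTransGen.head rfl ?_
    have : ss ((TM2.Stmt.branch f q₁ q₂, v), S) = ((cond (f v) q₁ q₂, v), S) := by
      simp [ss, nx, nl, kap]
    rw [this]
    cases h : f v
    · simp only [TM2.stepAux, h, cond_false]; exact ih₂ _ _
    · simp only [TM2.stepAux, h, cond_true]; exact ih₁ _ _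
  | goto f =>
    refine Relation.ReflTransGen.head rfl ?_
    have : ss ((TM2.Stmt.goto f, v), S) = ((prog (f v), v), S) := by
      simp [ss, nx, nl, kap]
    rw [this]
    exact Relation.ReflTransGen.refl
  | halt => exact Relation.ReflTransGen.refl

theorem sr_of_reaches {a b : Cfg'} (h : StateTransition.Reaches stp a b) : SR (sm a) (sm b) := by
  induction h with
  | refl => exact Relation.ReflTransGen.refl
  | @tail b c _ hs ih =>
    refine ih.trans ?_
    obtain ⟨l, v, S⟩ := b
    cases l with
    | none => cases hs
    | some l =>
      have hs' : TM2.stepAux (prog l) v S = c := Option.some.inj hs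
      subst hs'
      exact sr_stmt _ _ _

theorem halts_iff (a fin : Cfg') (hfin : fin.l = none)
    (huniq : ∀ b, b ∈ StateTransition.eval stp a → b = fin) :
    (StateTransition.eval stp a).Dom ↔ SR (sm a) (sm fin) := by
  constructor
  · intro h
    obtain ⟨b, hb⟩ := Part.dom_iff_mem.1 h
    have := huniq b hb
    subst this
    exact sr_of_reaches (StateTransition.mem_eval.1 hb).1
  · intro h
    have h1 : ∀ y, SR (sm a) y → StateTransition.Reaches stp (big (sm a)) (big y) := by
      intro y hy
      induction hy with
      | refl => exact Relation.ReflTransGen.refl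
      | tail _ hs ih => subst hs; exact ih.trans (big_ss _)
    have h2 := h1 _ h
    have h3 : big (sm fin) = fin := by
      obtain ⟨l, v, S⟩ := fin
      simp only at hfin
      subst hfin
      rfl
    rw [h3] at h2
    have h4 : StateTransition.Reaches stp a (big (sm a)) := by
      obtain ⟨l, v, S⟩ := a
      cases l with
      | none => exact Relation.ReflTransGen.refl
      | some l => exact Relation.ReflTransGen.single rfl
    refine Part.dom_iff_mem.2 ⟨fin, StateTransition.mem_eval.2 ⟨h4.trans h2, ?_⟩⟩
    obtain ⟨l, v, S⟩ := fin
    simp only at hfin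
    subst hfin
    rfl

section Fin
variable (B : Finset Λ')

def Ok (q : St) : Prop := q = TM2.Stmt.halt ∨ some q ∈ TM2.stmts prog B

theorem ok_nx (hB : ∀ q ∈ B, TM2.SupportsStmt B (prog q)) (q : St) (v o : Option Γ') (h : Ok B q) :
    Ok B (nx q v o).1 := by
  rcases h with rfl | h
  · exact Or.inl rfl
  have hsup : TM2.SupportsStmt B q := by
    simp only [TM2.stmts, Finset.mem_insertNone, Finset.mem_biUnion, Option.mem_def, Option.some.injEq,
      forall_eq'] at h
    obtain ⟨l, hl, h⟩ := h
    exact TM2.stmts₁_supportsStmt_mono h (hB _ hl)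
  cases q with
  | push k f q => exact Or.inr (TM2.stmts_trans (by simp [TM2.stmts₁, nx, TM2.stmts₁_self]) h)
  | peek k f q => exact Or.inr (TM2.stmts_trans (by simp [TM2.stmts₁, nx, TM2.stmts₁_self]) h)
  | pop k f q => exact Or.inr (TM2.stmts_trans (by simp [TM2.stmts₁, nx, TM2.stmts₁_self]) h)
  | load a q => exact Or.inr (TM2.stmts_trans (by simp [TM2.stmts₁, nx, TM2.stmts₁_self]) h)
  | branch f q₁ q₂ =>
    refine Or.inr (TM2.stmts_trans ?_ h)
    cases hf : f v <;> simp [TM2.stmts₁, nx, hf, TM2.stmts₁_self]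
  | goto f =>
    right
    simp only [TM2.stmts, Finset.mem_insertNone, Finset.mem_biUnion, Option.mem_def, Option.some.injEq,
      forall_eq']
    exact ⟨f v, hsup v, TM2.stmts₁_self⟩
  | halt => exact Or.inl rfl

/-- finite state type -/
abbrev QT := {x : St × Option Γ' // Ok B x.1}

instance : Finite (QT B) := by
  have : Set.Finite {x : St × Option Γ' | Ok B x.1} := by
    have h1 : Set.Finite {q : St | Ok B q} := by
      have h2 : Set.Finite {q : St | some q ∈ TM2.stmts prog B} :=
        Set.Finite.preimage (Option.some_injective _).injOn (TM2.stmts prog B).finite_toSet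
      exact (Set.finite_singleton _).union h2
    exact (h1.prod (Set.finite_univ (α := Option Γ'))).subset (fun x hx => ⟨hx, trivial⟩)
  exact this.to_subtype

/-- The digit machine. -/
noncomputable def dm (hB : ∀ q ∈ B, TM2.SupportsStmt B (prog q)) : DigM (QT B) K' where
  κ q := kap q.1.1
  δ q d := ⟨nx q.1.1 q.1.2 (hd d), ok_nx B hB _ _ _ q.2⟩
  c q d := cc q.1.1 q.1.2 d
  μ q d := mm q.1.1 d
  hμ _ _ := mm_ne _ _

/-- relation of small configurations with digit machine configurations -/
def Rep (x : (St × Option Γ') × Sk) (y : QT B × (K' → ℕ)) : Prop :=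
  y.1.1 = x.1 ∧ ∀ k, y.2 k = encS (x.2 k)

theorem rep_nxt (hB : ∀ q ∈ B, TM2.SupportsStmt B (prog q)) {x y} (h : Rep B x y) :
    Rep B (ss x) ((dm B hB).nxt y) := by
  obtain ⟨⟨q, v⟩, S⟩ := x
  obtain ⟨⟨⟨q', v'⟩, hq⟩, T⟩ := y
  obtain ⟨h1, h2⟩ := h
  simp only [Prod.mk.injEq] at h1 h2
  obtain ⟨rfl, rfl⟩ := h1
  have hT : T = fun k => encS (S k) := funext h2
  subst hT
  refine ⟨?_, ?_⟩
  · simp only [DigM.nxt, dm, DigM.dg, ss, encS_hd]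
  · intro k
    simp only [DigM.nxt, dm, DigM.dg, ss]
    by_cases hk : k = kap q'
    · subst hk
      simp only [Function.update_self, enc_nl]
    · simp only [Function.update_of_ne hk]

theorem encS_inj {L L' : List Γ'} (h : encS L = encS L') : L = L' := by
  induction L generalizing L' with
  | nil =>
    cases L' with
    | nil => rfl
    | cons a l => exfalso; cases a <;> simp only [encS, dig] at h <;> omega
  | cons a l ih =>
    cases L' with
    | nil => exfalso; cases a <;> simp only [encS, dig] at h <;> omega
    | cons a' l' =>
      have h1 : dig a = dig a' := by rw [← encS_mod a l, h, encS_mod]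
      have h2 : encS l = encS l' := by rw [← encS_div a l, h, encS_div]
      rw [ih h2]
      cases a <;> cases a' <;> simp_all [dig]

theorem rep_inj {x x' y} (h : Rep B x y) (h' : Rep B x' y) : x = x' := by
  refine Prod.ext (h.1.symm.trans h'.1) ?_
  funext k
  exact encS_inj ((h.2 k).symm.trans (h'.2 k))
theorem rep_inj' {x y y'} (h : Rep B x y) (h' : Rep B x y') : y = y' := by
  refine Prod.ext (Subtype.ext (h.1.trans h'.1.symm)) ?_
  funext k
  exact (h.2 k).trans (h'.2 k).symm

theorem sr_iff (hB : ∀ q ∈ B, TM2.SupportsStmt B (prog q)) {x x' y y'} (h : Rep B x y)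
    (h' : Rep B x' y') :
    SR x x' ↔ Relation.ReflTransGen (fun a b => b = (dm B hB).nxt a) y y' := by
  constructor
  · intro hr
    have : ∀ z, SR x z → ∃ w, Rep B z w ∧ Relation.ReflTransGen (fun a b => b = (dm B hB).nxt a) y w := by
      intro z hz
      induction hz with
      | refl => exact ⟨y, h, Relation.ReflTransGen.refl⟩
      | tail _ hs ih =>
        obtain ⟨w, hw, hr⟩ := ih
        subst hs
        exact ⟨_, rep_nxt B hB hw, hr.tail rfl⟩
    obtain ⟨w, hw, hr⟩ := this _ hr
    rw [rep_inj' B h' hw]; exact hr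
  · intro hr
    have : ∀ w, Relation.ReflTransGen (fun a b => b = (dm B hB).nxt a) y w → ∃ z, Rep B z w ∧ SR x z := by
      intro w hw
      induction hw with
      | refl => exact ⟨x, h, Relation.ReflTransGen.refl⟩
      | tail _ hs ih =>
        obtain ⟨z, hz, hr⟩ := ih
        subst hs
        exact ⟨_, rep_nxt B hB hz, hr.tail rfl⟩
    obtain ⟨z, hz, hr⟩ := this _ hr
    rw [rep_inj B h' hz]; exact hr

end Fin

end StkM

namespace StkM
open Turing Turing.PartrecToTM2

instance : Fintype K' :=
  ⟨{K'.main, K'.rev, K'.aux, K'.stack}, by intro x; cases x <;> simp⟩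

/-- The halting set. -/
def KH (n : ℕ) : Prop := (Nat.Partrec.Code.eval (Denumerable.ofNat Nat.Partrec.Code n) 0).Dom

/-- The partial function whose domain is the halting set. -/
def hf (n : ℕ) : Part ℕ :=
  (Nat.Partrec.Code.eval (Denumerable.ofNat Nat.Partrec.Code n) 0).map (fun _ => 0)

theorem hf_part : Partrec hf := by
  have h : Partrec (fun n : ℕ => Nat.Partrec.Code.eval (Denumerable.ofNat Nat.Partrec.Code n) 0) :=
    Nat.Partrec.Code.eval_part.comp (Computable.ofNat _) (Computable.const 0)
  exact h.map (Computable.const 0).to₂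

theorem KH_re : ∃ g : ℕ →. Unit, Partrec g ∧ ∀ n, KH n ↔ (g n).Dom :=
  ⟨fun n => (hf n).map (fun _ => ()), hf_part.map (Computable.const ()).to₂, fun _ => Iff.rfl⟩

theorem KH_nr : ¬ ComputablePred KH := by
  intro h
  apply ComputablePred.halting_problem 0
  obtain ⟨d, hd⟩ := h
  refine ⟨fun _ => Classical.propDecidable _, (hd.comp Computable.encode).of_eq fun c => ?_⟩
  exact decide_eq_decide.2 (by rw [KH, Denumerable.ofNat_encode])

/-- logarithm -/
def lg (m : ℕ) : ℕ := Nat.findGreatest (fun b => 2 ^ b ≤ m) m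

theorem lg_pow (n : ℕ) : lg (2 ^ n) = n := by
  unfold lg
  rw [Nat.findGreatest_eq_iff]
  refine ⟨Nat.lt_two_pow_self.le, fun _ => le_rfl, fun k hk _ h => ?_⟩
  exact absurd (Nat.pow_lt_pow_right (by norm_num : 1 < 2) hk) (not_lt.2 h)

theorem lg_prim : Primrec lg := by
  have hp : Primrec₂ (fun a b : ℕ => a ^ b) := Primrec₂.unpaired'.1 Nat.Primrec.pow
  have h : PrimrecRel (fun m b : ℕ => 2 ^ b ≤ m) :=
    Primrec.nat_le.comp (hp.comp (Primrec.const 2) Primrec.snd) Primrec.fst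
  exact Primrec.nat_findGreatest Primrec.id h

theorem exists_tm : ∃ c : ToPartrec.Code, ∀ n : ℕ, c.eval [2 ^ n] = pure <$> hf n := by
  have h : Partrec (fun m => hf (lg m)) := hf_part.comp lg_prim.to_comp
  obtain ⟨c, hc⟩ := ToPartrec.Code.exists_code (Nat.Partrec'.part_iff₁.2 h)
  refine ⟨c, fun n => ?_⟩
  have := hc ⟨[2 ^ n], rfl⟩
  rw [show ([2 ^ n] : List ℕ) = (⟨[2 ^ n], rfl⟩ : List.Vector ℕ 1).1 from rfl, this]
  simp only [List.Vector.head, lg_pow]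

/-- The input number. -/
def NN (n : ℕ) : ℕ := Nat.rec 14 (fun _ x => 3 + 5 * x) n

theorem NN_comp : Computable NN := by
  have : Primrec NN := Primrec.nat_rec₁ 14
    (Primrec.nat_add.comp (Primrec.const 3) (Primrec.nat_mul.comp (Primrec.const 5) Primrec.snd))
  exact this.to_comp

theorem trNat_pow (n : ℕ) : trNat (2 ^ n) = List.replicate n Γ'.bit0 ++ [Γ'.bit1] := by
  have : ∀ n : ℕ, ∃ p : PosNum, ((2 ^ n : ℕ) : Num) = Num.pos p ∧
      trPosNum p = List.replicate n Γ'.bit0 ++ [Γ'.bit1] := by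
    intro n
    induction n with
    | zero => exact ⟨PosNum.one, by simp; rfl, rfl⟩
    | succ n ih =>
      obtain ⟨p, h1, h2⟩ := ih
      refine ⟨PosNum.bit0 p, ?_, by simp [trPosNum, h2, List.replicate_succ]⟩
      rw [pow_succ, mul_two, Nat.cast_add, h1]
      exact (Num.bit0_of_bit0 (Num.pos p))
  obtain ⟨p, h1, h2⟩ := this n
  rw [trNat, h1, trNum, h2]

theorem encS_in (n : ℕ) : encS (trList [2 ^ n]) = NN n := by
  simp only [trList, trNat_pow]
  induction n with
  | zero => rfl
  | succ n ih =>
    simp only [List.replicate_succ, List.cons_append, encS, ih, dig, NN]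

theorem eval_dom (c : ToPartrec.Code) (hc : ∀ n : ℕ, c.eval [2 ^ n] = pure <$> hf n) (n : ℕ) :
    KH n ↔ SR (sm (init c [2 ^ n])) (sm (PartrecToTM2.halt [0])) := by
  have he : StateTransition.eval stp (init c [2 ^ n]) = PartrecToTM2.halt <$> c.eval [2 ^ n] :=
    tr_eval c [2 ^ n]
  rw [hc] at he
  rw [← halts_iff _ _ rfl]
  · rw [he]; exact Iff.rfl
  · intro b hb
    rw [he] at hb
    simp only [Part.map_eq_map, Part.mem_map_iff, hf] at hb
    obtain ⟨_, ⟨_, ⟨_, _, rfl⟩, rfl⟩, rfl⟩ := hb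
    rfl

theorem final :
    ∃ (c : ℕ) (f : ℕ → List (List (Fin 2 × Bool))),
      Computable f ∧
      (∀ n : ℕ, (wordsSet (f n)).ncard = c) ∧
      (∀ n : ℕ, Monoid.IsTorsion (Abelianization (PresentedGroup (wordsSet (f n))))) ∧
      (∀ n : ℕ, Subsingleton (PresentedGroup (wordsSet (f n))) ∨
        Infinite (PresentedGroup (wordsSet (f n)))) ∧
      (∃ g : ℕ →. Unit, Partrec g ∧
        ∀ n : ℕ, Subsingleton (PresentedGroup (wordsSet (f n))) ↔ (g n).Dom) ∧
      ¬ ComputablePred (fun n : ℕ => Subsingleton (PresentedGroup (wordsSet (f n)))) := by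
  obtain ⟨c, hc⟩ := exists_tm
  obtain ⟨hs1, hs2⟩ := tr_supports c Cont'.halt
  have hB : ∀ q ∈ codeSupp c Cont'.halt, TM2.SupportsStmt (codeSupp c Cont'.halt) (prog q) :=
    fun q hq => hs2 q hq
  have hs1' : trNormal c Cont'.halt ∈ codeSupp c Cont'.halt := hs1
  set B := codeSupp c Cont'.halt with hBdef
  have : Fintype (QT B) := Fintype.ofFinite _
  have hok : Ok B (prog (trNormal c Cont'.halt)) := by
    right
    simp only [TM2.stmts, Finset.mem_insertNone, Finset.mem_biUnion, Option.mem_def,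
      Option.some.injEq, forall_eq']
    exact ⟨_, hs1', TM2.stmts₁_self⟩
  let q0 : QT B := ⟨(prog (trNormal c Cont'.halt), none), hok⟩
  let qf : QT B := ⟨(TM2.Stmt.halt, none), Or.inl rfl⟩
  let x0 : QT B × (K' → ℕ) := (qf, fun k => encS (K'.elim (trList [0]) [] [] [] k))
  have hx0 : Rep B (sm (PartrecToTM2.halt [0])) x0 := ⟨rfl, fun _ => rfl⟩
  have hfix : (dm B hB).nxt x0 = x0 := by
    have h := rep_nxt B hB hx0
    have h2 : ss (sm (PartrecToTM2.halt [0])) = sm (PartrecToTM2.halt [0]) := by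
      simp [ss, sm, PartrecToTM2.halt, nx, nl, kap]
    rw [h2] at h
    exact rep_inj' B h hx0
  refine main_reduction (dm B hB).toAff (DigM.enc x0)
    (fun o => o.elim (DigM.nm q0 : ℤ) (fun _ => 0)) (some K'.main) NN NN_comp
    ((dm B hB).inv_of_fixed x0 hfix) KH (fun n => ?_) KH_re KH_nr
  rw [eval_dom c hc n]
  have hr : Rep B (sm (init c [2 ^ n]))
      ((q0, fun k => encS (K'.elim (trList [2 ^ n]) [] [] [] k)) : QT B × (K' → ℕ)) :=
    ⟨rfl, fun _ => rfl⟩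
  rw [sr_iff B hB hr hx0, ← DigM.reach_enc]
  have : DigM.enc ((q0, fun k => encS (K'.elim (trList [2 ^ n]) [] [] [] k)) : QT B × (K' → ℕ))
      = (fun o => o.elim (DigM.nm q0 : ℤ) (fun _ => 0)) + Pi.single (some K'.main) (NN n : ℤ) := by
    funext o
    rcases o with _ | k
    · simp [DigM.enc]
    · rw [← encS_in]
      cases k <;> simp [DigM.enc, encS]
  rw [this]

end StkM

/-- Theorem 3.4 (Miller): there is a computable sequence `(Σ_n)` of finite subsets of the
free group on two generators, of constant cardinality `c`, such that each `⟨x,y | Σ_n⟩`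
has torsion abelianization (zero first Betti number), is trivial or infinite, and the set
of `n` with `⟨x,y | Σ_n⟩` trivial is recursively enumerable but not recursive. -/
theorem stmt5 :
    ∃ (c : ℕ) (f : ℕ → List (List (Fin 2 × Bool))),
      Computable f ∧
      (∀ n : ℕ, (wordsSet (f n)).ncard = c) ∧
      (∀ n : ℕ, Monoid.IsTorsion (Abelianization (PresentedGroup (wordsSet (f n))))) ∧
      (∀ n : ℕ, Subsingleton (PresentedGroup (wordsSet (f n))) ∨
        Infinite (PresentedGroup (wordsSet (f n)))) ∧
      (∃ g : ℕ →. Unit, Partrec g ∧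
        ∀ n : ℕ, Subsingleton (PresentedGroup (wordsSet (f n))) ↔ (g n).Dom) ∧
      ¬ ComputablePred (fun n : ℕ => Subsingleton (PresentedGroup (wordsSet (f n)))) := by
  exact StkM.final
end

section
/- Let H be a freely indecomposable group and h ∈ H. Let D be the amalgamated free product H ∗_{⟨h⟩} H of two copies of H along the cyclic subgroup generated by h, identified by the identity map (i.e., the pushout of the two copies of the inclusion Subgroup.zpowers h ↪ H). If there exist nontrivial groups G₁ and G₂ and a group isomorphism D ≃* G₁ ∗ G₂ (the free product of G₁ and G₂), then h = 1. (Lemma 3.3 of the paper.) -/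
/-- A group is freely indecomposable if whenever it is isomorphic to a free product
(coproduct) of two groups, one of the factors is trivial. -/
def FreelyIndecomposable (H : Type) [Group H] : Prop :=
  ∀ (A B : Type) (_ : Group A) (_ : Group B),
    Nonempty (H ≃* Monoid.Coprod A B) → Subsingleton A ∨ Subsingleton B

open Monoid
open scoped Pointwise

/-- A bipolar structure (with trivial base group) in the sense of Stallings. -/
structure Bipolar (G : Type) [Group G] where
  fst : G → Bool
  lst : G → Bool
  len : G → ℕ
  fst_inv : ∀ g, g ≠ 1 → fst g⁻¹ = lst g
  len_pos : ∀ g, g ≠ 1 → 0 < len g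
  mul_ne : ∀ g k, g ≠ 1 → k ≠ 1 → lst g ≠ fst k → g * k ≠ 1
  fst_mul : ∀ g k, g ≠ 1 → k ≠ 1 → lst g ≠ fst k → fst (g * k) = fst g
  lst_mul : ∀ g k, g ≠ 1 → k ≠ 1 → lst g ≠ fst k → lst (g * k) = lst k
  len_mul : ∀ g k, g ≠ 1 → k ≠ 1 → lst g ≠ fst k → len (g * k) = len g + len k

namespace Bipolar

variable {G : Type} [Group G] (P : Bipolar G)

theorem lst_inv (g : G) (hg : g ≠ 1) : P.lst g⁻¹ = P.fst g := by
  have := P.fst_inv g⁻¹ (inv_ne_one.mpr hg)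
  rw [inv_inv] at this
  exact this.symm

/-- Pullback of a bipolar structure along an injective homomorphism. -/
def comap {K : Type} [Group K] (f : K →* G) (hf : Function.Injective f) : Bipolar K where
  fst g := P.fst (f g)
  lst g := P.lst (f g)
  len g := P.len (f g)
  fst_inv g hg := by
    rw [map_inv]; exact P.fst_inv _ ((map_ne_one_iff f hf).mpr hg)
  len_pos g hg := P.len_pos _ ((map_ne_one_iff f hf).mpr hg)
  mul_ne g k hg hk h := by
    rw [← map_ne_one_iff f hf, map_mul]
    exact P.mul_ne _ _ ((map_ne_one_iff f hf).mpr hg) ((map_ne_one_iff f hf).mpr hk) h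
  fst_mul g k hg hk h := by
    rw [map_mul]
    exact P.fst_mul _ _ ((map_ne_one_iff f hf).mpr hg) ((map_ne_one_iff f hf).mpr hk) h
  lst_mul g k hg hk h := by
    rw [map_mul]
    exact P.lst_mul _ _ ((map_ne_one_iff f hf).mpr hg) ((map_ne_one_iff f hf).mpr hk) h
  len_mul g k hg hk h := by
    rw [map_mul]
    exact P.len_mul _ _ ((map_ne_one_iff f hf).mpr hg) ((map_ne_one_iff f hf).mpr hk) h

/-- Irreducible elements. -/
def Irr (g : G) : Prop :=
  g ≠ 1 ∧ ∀ c d, c ≠ 1 → d ≠ 1 → g = c * d → P.lst c = P.fst d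

variable {P}

theorem Irr.inv {g : G} (hg : P.Irr g) : P.Irr g⁻¹ := by
  refine ⟨inv_ne_one.mpr hg.1, fun c d hc hd h => ?_⟩
  have h2 := hg.2 d⁻¹ c⁻¹ (inv_ne_one.mpr hd) (inv_ne_one.mpr hc)
    (by rw [← mul_inv_rev, ← h, inv_inv])
  rw [P.lst_inv d hd, P.fst_inv c hc] at h2
  exact h2.symm

theorem Irr.mul {u v : G} (hu : P.Irr u) (hv : P.Irr v) (h : P.lst u = P.fst v)
    (hne : u * v ≠ 1) :
    P.Irr (u * v) ∧ P.fst (u * v) = P.fst u ∧ P.lst (u * v) = P.lst v := by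
  refine ⟨⟨hne, fun c d hc hd hcd => ?_⟩, ?_, ?_⟩
  · by_contra hx
    by_cases hw : u⁻¹ * c = 1
    · have hcu : c = u := by rw [inv_mul_eq_one] at hw; exact hw.symm
      subst hcu
      have : v = d := mul_left_cancel hcd
      subst this
      exact hx h
    · have h1 := hv.2 (u⁻¹ * c) d hw hd (by rw [mul_assoc, ← hcd]; simp)
      have h2 := hu.inv.2 (u⁻¹ * c) c⁻¹ hw (inv_ne_one.mpr hc) (by simp)
      rw [P.fst_inv c hc] at h2
      exact hx (h2.symm.trans h1)
  · have := hv.2 u⁻¹ (u * v) (inv_ne_one.mpr hu.1) hne (by simp)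
    rw [P.lst_inv u hu.1] at this
    exact this.symm
  · have := hu.2 (u * v) v⁻¹ hne (inv_ne_one.mpr hv.1) (by simp)
    rw [P.fst_inv v hv.1] at this
    exact this

variable (P)

theorem mem_of_irr (S : Subgroup G) (hS : ∀ g, P.Irr g → g ∈ S) (g : G) : g ∈ S := by
  induction hn : P.len g using Nat.strong_induction_on generalizing g with
  | _ n ih =>
    by_cases hg1 : g = 1
    · subst hg1; exact S.one_mem
    by_cases hg : P.Irr g
    · exact hS g hg
    · unfold Irr at hg
      push Not at hg
      obtain ⟨c, d, hc, hd, hcd, hne⟩ := hg hg1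
      have hl := P.len_mul c d hc hd hne
      have h1 := P.len_pos c hc
      have h2 := P.len_pos d hd
      rw [← hcd] at hl
      rw [hcd]
      exact S.mul_mem (ih _ (by omega) c rfl) (ih _ (by omega) d rfl)

/-- The subgroup of irreducible elements of type `(i, i)`. -/
def A (i : Bool) : Subgroup G where
  carrier := {g | g = 1 ∨ (P.Irr g ∧ P.fst g = i ∧ P.lst g = i)}
  one_mem' := Or.inl rfl
  mul_mem' := by
    rintro a b (rfl | ⟨ha, ha1, ha2⟩) (rfl | ⟨hb, hb1, hb2⟩)
    · left; simp
    · right; simpa using ⟨hb, hb1, hb2⟩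
    · right; simpa using ⟨ha, ha1, ha2⟩
    · by_cases hne : a * b = 1
      · left; exact hne
      · right
        obtain ⟨h1, h2, h3⟩ := ha.mul hb (ha2.trans hb1.symm) hne
        exact ⟨h1, h2.trans ha1, h3.trans hb2⟩
  inv_mem' := by
    rintro a (rfl | ⟨ha, ha1, ha2⟩)
    · left; simp
    · right
      exact ⟨ha.inv, (P.fst_inv a ha.1).trans ha2, (P.lst_inv a ha.1).trans ha1⟩

theorem mem_A {i : Bool} {g : G} :
    g ∈ P.A i ↔ g = 1 ∨ (P.Irr g ∧ P.fst g = i ∧ P.lst g = i) := Iff.rfl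

end Bipolar

/-- The binary free product as an indexed one. -/
def coprodEquivBool (M : Bool → Type) [∀ b, Group (M b)] :
    CoprodI M ≃* Monoid.Coprod (M true) (M false) :=
  MonoidHom.toMulEquiv
    (CoprodI.lift (fun b => match b with
      | true => Monoid.Coprod.inl
      | false => Monoid.Coprod.inr))
    (Monoid.Coprod.lift CoprodI.of CoprodI.of)
    (by
      apply CoprodI.ext_hom
      intro b
      cases b <;> ext x <;> simp)
    (by
      apply Monoid.Coprod.hom_ext <;> ext x <;> simp)

theorem lift_injective_of_neWord {M : Bool → Type} [∀ b, Group (M b)] {G : Type} [Group G]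
    (f : ∀ b, M b →* G)
    (h : ∀ i j (w : CoprodI.NeWord M i j), CoprodI.lift f w.prod ≠ 1) :
    Function.Injective (CoprodI.lift f) := by
  classical
  rw [injective_iff_map_eq_one]
  intro a ha
  by_contra hne
  have hw : CoprodI.Word.equiv a ≠ CoprodI.Word.empty := by
    intro h2
    apply hne
    have := congrArg CoprodI.Word.prod h2
    rw [CoprodI.Word.prod_empty] at this
    rw [← this]
    exact (CoprodI.Word.equiv.symm_apply_apply a).symm
  obtain ⟨i, j, w, hw⟩ := CoprodI.NeWord.of_word _ hw
  apply h i j w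
  have : w.prod = a := by
    unfold CoprodI.NeWord.prod
    rw [hw]
    exact CoprodI.Word.equiv.symm_apply_apply a
  rw [this, ha]

theorem trivial_of_indec {H : Type} [Group H] (hH : FreelyIndecomposable H)
    (S : Bool → Subgroup H)
    (hinj : Function.Injective (CoprodI.lift (fun b => (S b).subtype)))
    (hgen : ∀ T : Subgroup H, S true ≤ T → S false ≤ T → T = ⊤) :
    S true = ⊥ ∨ S false = ⊥ := by
  have hsurj : Function.Surjective (CoprodI.lift (fun b => (S b).subtype)) := by
    rw [← MonoidHom.range_eq_top]
    apply hgen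
    · intro x hx
      exact ⟨CoprodI.of (i := true) (⟨x, hx⟩ : S true), by simp⟩
    · intro x hx
      exact ⟨CoprodI.of (i := false) (⟨x, hx⟩ : S false), by simp⟩
  let e := (MulEquiv.ofBijective _ ⟨hinj, hsurj⟩).symm.trans
    (coprodEquivBool (fun b => S b))
  rcases hH (S true) (S false) inferInstance inferInstance ⟨e⟩ with h | h
  · left
    exact (Subgroup.eq_bot_iff_forall _).mpr fun x hx =>
      congrArg Subtype.val (Subsingleton.elim (⟨x, hx⟩ : S true) 1)
  · right
    exact (Subgroup.eq_bot_iff_forall _).mpr fun x hx =>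
      congrArg Subtype.val (Subsingleton.elim (⟨x, hx⟩ : S false) 1)

namespace Bipolar

variable {G : Type} [Group G] (P : Bipolar G)

/-- No irreducible element of mixed type. -/
theorem case_amalgam (hG : FreelyIndecomposable G)
    (hno : ∀ g, P.Irr g → P.fst g = P.lst g) (g : G) (hg : g ≠ 1) : P.fst g = P.lst g := by
  have key : ∀ i j (w : CoprodI.NeWord (fun b => P.A b) i j),
      CoprodI.lift (fun b => (P.A b).subtype) w.prod ≠ 1 ∧
      P.fst (CoprodI.lift (fun b => (P.A b).subtype) w.prod) = i ∧
      P.lst (CoprodI.lift (fun b => (P.A b).subtype) w.prod) = j := by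
    intro i j w
    induction w with
    | singleton x hx =>
      have hx' : (x : G) ≠ 1 := by simpa using hx
      rcases P.mem_A.mp x.2 with h | ⟨h1, h2, h3⟩
      · exact absurd h hx'
      · simpa using ⟨hx, h2, h3⟩
    | append w₁ hne w₂ ih₁ ih₂ =>
      rw [CoprodI.NeWord.append_prod, map_mul]
      obtain ⟨a1, a2, a3⟩ := ih₁
      obtain ⟨b1, b2, b3⟩ := ih₂
      have hh := a3.trans_ne (hne.trans_eq b2.symm)
      exact ⟨P.mul_ne _ _ a1 b1 hh, (P.fst_mul _ _ a1 b1 hh).trans a2,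
        (P.lst_mul _ _ a1 b1 hh).trans b3⟩
  have hirr : ∀ g, P.Irr g → g ∈ P.A (P.fst g) := fun g hg =>
    Or.inr ⟨hg, rfl, (hno g hg).symm⟩
  have hb := trivial_of_indec hG P.A (lift_injective_of_neWord _ fun i j w => (key i j w).1)
    (fun T h1 h2 => by
      rw [eq_top_iff]
      intro x _
      apply P.mem_of_irr T
      intro g hg
      have := hirr g hg
      cases hf : P.fst g <;> rw [hf] at this
      · exact h2 this
      · exact h1 this)
  have fin : ∀ i, P.A i = ⊥ → P.fst g = P.lst g := by
    intro i hi
    have : g ∈ P.A (!i) := by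
      apply P.mem_of_irr
      intro k hk
      have h1 := hirr k hk
      by_cases hki : P.fst k = i
      · rw [hki, hi] at h1
        exact absurd (Subgroup.mem_bot.mp h1) hk.1
      · have : P.fst k = !i := by
          cases i <;> simpa using hki
        rwa [this] at h1
    rcases P.mem_A.mp this with h | ⟨h1, h2, h3⟩
    · exact absurd h hg
    · rw [h2, h3]
  rcases hb with h | h <;> exact fin _ h

theorem pow_type {t : G} (ht : t ≠ 1) (h1 : P.fst t = true) (h2 : P.lst t = false) (n : ℕ) :
    t ^ (n + 1) ≠ 1 ∧ P.fst (t ^ (n + 1)) = true ∧ P.lst (t ^ (n + 1)) = false := by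
  induction n with
  | zero => simpa using ⟨ht, h1, h2⟩
  | succ n ih =>
    obtain ⟨a, b, c⟩ := ih
    rw [pow_succ]
    have hh : P.lst (t ^ (n + 1)) ≠ P.fst t := by rw [c, h1]; simp
    exact ⟨P.mul_ne _ _ a ht hh, (P.fst_mul _ _ a ht hh).trans b,
      (P.lst_mul _ _ a ht hh).trans h2⟩

theorem zpow_mul_pos {t : G} (ht : t ≠ 1) (h1 : P.fst t = true) (h2 : P.lst t = false) (n : ℕ)
    (g : G) (hg : g ≠ 1) (hf : P.fst g = true) :
    t ^ n * g ≠ 1 ∧ P.fst (t ^ n * g) = true := by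
  cases n with
  | zero => simpa using ⟨hg, hf⟩
  | succ n =>
    obtain ⟨a, b, c⟩ := P.pow_type ht h1 h2 n
    have hh : P.lst (t ^ (n + 1)) ≠ P.fst g := by rw [c, hf]; simp
    exact ⟨P.mul_ne _ _ a hg hh, (P.fst_mul _ _ a hg hh).trans b⟩

theorem zpow_mul_neg {t : G} (ht : t ≠ 1) (h1 : P.fst t = true) (h2 : P.lst t = false) (n : ℕ)
    (g : G) (hf : g = 1 ∨ P.fst g = false) :
    t⁻¹ ^ n * g = 1 ∨ P.fst (t⁻¹ ^ n * g) = false := by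
  cases n with
  | zero => simpa using hf
  | succ n =>
    obtain ⟨a, b, c⟩ := P.pow_type ht h1 h2 n
    have a' := inv_ne_one.mpr a
    have b' := P.fst_inv _ a
    have c' := P.lst_inv _ a
    rw [← inv_pow] at a' b' c'
    right
    by_cases hg : g = 1
    · rw [hg, mul_one, b', c]
    · have hf := hf.resolve_left hg
      have hh : P.lst (t⁻¹ ^ (n + 1)) ≠ P.fst g := by rw [c', b, hf]; simp
      rw [P.fst_mul _ _ a' hg hh, b', c]

/-- An irreducible element of mixed type. -/
theorem case_hnn (hG : FreelyIndecomposable G) (t : G) (ht : P.Irr t)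
    (h1 : P.fst t = true) (h2 : P.lst t = false) (g : G) : g ∈ Subgroup.zpowers t := by
  have ht1 := ht.1
  have hti1 : t⁻¹ ≠ 1 := inv_ne_one.mpr ht1
  have hif : P.fst t⁻¹ = false := (P.fst_inv t ht1).trans h2
  have hil : P.lst t⁻¹ = true := (P.lst_inv t ht1).trans h1
  classical
  let S : Bool → Subgroup G := fun b => match b with
    | true => Subgroup.zpowers t
    | false => P.A false
  -- `Pos`, `Neg` half spaces
  let Pos : Set G := {g | g ≠ 1 ∧ P.fst g = true}
  let Neg : Set G := {g | g = 1 ∨ P.fst g = false}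
  have hPN : ∀ g, g ∈ Pos ↔ g ∉ Neg := by
    intro g
    simp only [Pos, Neg, Set.mem_ofPred_eq, not_or, Bool.not_eq_false]
  let XB : Set G := {g | g ∈ Pos ∨ t * g ∈ Neg}
  have hXB : ∀ g, g ∈ XBᶜ ↔ g ∈ Neg ∧ t * g ∈ Pos := by
    intro g
    simp only [XB, Set.mem_compl_iff, Set.mem_ofPred_eq, hPN, not_or, not_not]
  let X : Bool → Set G := fun b => match b with
    | true => XB
    | false => XBᶜ
  -- irreducible computations
  have hmixed : ∀ a, P.Irr a → P.fst a = false → P.lst a = false →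
      ∀ g, (g ∈ Pos → a * g ∈ Neg ∧ t * a * g ∈ Pos) ∧
        (g ∈ Neg → a * t⁻¹ * g ∈ Neg ∧ t * a * t⁻¹ * g ∈ Pos) := by
    intro a ha haf hal g
    have hta : t * a ≠ 1 := by
      intro h
      have : a = t⁻¹ := (inv_eq_of_mul_eq_one_right h).symm
      rw [this, hil] at hal
      exact absurd hal (by simp)
    have hat : a * t⁻¹ ≠ 1 := by
      intro h
      have : a = t := mul_inv_eq_one.mp h
      rw [this, h1] at haf
      exact absurd haf (by simp)
    obtain ⟨c1, c2, c3⟩ := ht.mul ha (h2.trans haf.symm) hta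
    obtain ⟨d1, d2, d3⟩ := ha.mul ht.inv (hal.trans hif.symm) hat
    have htat : t * a * t⁻¹ ≠ 1 := by
      intro h
      have := mul_inv_eq_one.mp h
      exact ha.1 (by simpa using this)
    obtain ⟨e1, e2, e3⟩ := c1.mul ht.inv ((c3.trans hal).trans hif.symm) htat
    have posmul : ∀ u g, u ≠ 1 → P.lst u = false → g ∈ Pos →
        u * g ≠ 1 ∧ P.fst (u * g) = P.fst u := by
      intro u g hu hl hg
      have hh : P.lst u ≠ P.fst g := by rw [hl, hg.2]; simp
      exact ⟨P.mul_ne _ _ hu hg.1 hh, P.fst_mul _ _ hu hg.1 hh⟩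
    have negmul : ∀ u g, u ≠ 1 → P.lst u = true → g ∈ Neg →
        u * g ≠ 1 ∧ P.fst (u * g) = P.fst u := by
      intro u g hu hl hg
      by_cases hg1 : g = 1
      · subst hg1; simpa using hu
      have hg2 := hg.resolve_left hg1
      have hh : P.lst u ≠ P.fst g := by rw [hl, hg2]; simp
      exact ⟨P.mul_ne _ _ hu hg1 hh, P.fst_mul _ _ hu hg1 hh⟩
    refine ⟨fun hg => ⟨?_, ?_⟩, fun hg => ⟨?_, ?_⟩⟩
    · obtain ⟨x, y⟩ := posmul a g ha.1 hal hg
      exact Or.inr (y.trans haf)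
    · obtain ⟨x, y⟩ := posmul (t * a) g hta (c3.trans hal) hg
      exact ⟨x, y.trans (c2.trans h1)⟩
    · obtain ⟨x, y⟩ := negmul (a * t⁻¹) g hat (d3.trans hil) hg
      exact Or.inr (y.trans (d2.trans haf))
    · obtain ⟨x, y⟩ := negmul (t * a * t⁻¹) g htat (e3.trans hil) hg
      exact ⟨x, y.trans (e2.trans (c2.trans h1))⟩
  have hinf : Infinite (S true) := by
    have : ¬ IsOfFinOrder t := by
      rw [isOfFinOrder_iff_pow_eq_one]
      rintro ⟨n, hn, hn1⟩
      obtain ⟨m, rfl⟩ : ∃ m, n = m + 1 := ⟨n - 1, by omega⟩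
      exact (P.pow_type ht1 h1 h2 m).1 hn1
    exact (infinite_zpowers.mpr this).to_subtype
  have hinj : Function.Injective (CoprodI.lift (fun b => (S b).subtype)) := by
    refine CoprodI.lift_injective_of_ping_pong (fun b => (S b).subtype)
      (Or.inr ⟨true, ?_⟩) X ?_ ?_ ?_
    · exact (Cardinal.natCast_le_aleph0 (n := 3)).trans (Cardinal.aleph0_le_mk _)
    · intro b
      cases b
      · exact ⟨1, (hXB 1).mpr ⟨Or.inl rfl, by simpa using ⟨ht1, h1⟩⟩⟩
      · exact ⟨t, Or.inl ⟨ht1, h1⟩⟩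
    · intro i j hij
      cases i <;> cases j
      · exact absurd rfl hij
      · exact disjoint_compl_left
      · exact disjoint_compl_right
      · exact absurd rfl hij
    · intro i j hij
      cases i <;> cases j
      · exact absurd rfl hij
      · rintro ⟨a, ha⟩ hne
        have hne : a ≠ 1 := by
          intro h
          apply hne
          exact Subtype.ext h
        obtain ⟨h3, h4, h5⟩ := (P.mem_A.mp ha).resolve_left hne
        rw [Set.smul_set_subset_iff]
        intro g hg
        change a * g ∈ XBᶜ
        rw [hXB]
        rcases hg with hg | hg
        · have := (hmixed a h3 h4 h5 g).1 hg
          rwa [mul_assoc] at this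
        · have := (hmixed a h3 h4 h5 (t * g)).2 hg
          simpa [mul_assoc] using this
      · rintro ⟨a, ha⟩ hne
        have hne : a ≠ 1 := by
          intro h
          apply hne
          exact Subtype.ext h
        rw [Set.smul_set_subset_iff]
        intro g hg
        change a * g ∈ XB
        obtain ⟨hg1, hg2⟩ := (hXB g).mp hg
        obtain ⟨n, rfl⟩ := Subgroup.mem_zpowers_iff.mp ha
        rcases n with n | n
        · cases n with
          | zero => exact absurd (by simp) hne
          | succ m =>
            left
            have := P.zpow_mul_pos ht1 h1 h2 m (t * g) hg2.1 hg2.2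
            have e : t ^ (Int.ofNat (m + 1)) * g = t ^ m * (t * g) := by
              rw [← mul_assoc, ← pow_succ]
              exact congrArg (· * g) (zpow_natCast t (m + 1))
            rw [e]
            exact this
        · right
          have := P.zpow_mul_neg ht1 h1 h2 n g hg1
          have e : t * (t ^ (Int.negSucc n) * g) = t⁻¹ ^ n * g := by
            rw [zpow_negSucc, pow_succ, mul_inv_rev, inv_pow]
            group
          rw [e]
          exact this
      · exact absurd rfl hij
  have hgen : ∀ T : Subgroup G, S true ≤ T → S false ≤ T → T = ⊤ := by
    intro T hT hF
    have htT : t ∈ T := hT (Subgroup.mem_zpowers t)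
    have hFF : ∀ g, g ≠ 1 → P.Irr g → P.fst g = false → P.lst g = false → g ∈ T :=
      fun g _ a b c => hF (Or.inr ⟨a, b, c⟩)
    have hTF : ∀ g, P.Irr g → P.fst g = true → P.lst g = false → g ∈ T := by
      intro g hg a b
      rw [← Subgroup.mul_mem_cancel_left T (T.inv_mem htT)]
      by_cases h : t⁻¹ * g = 1
      · rw [h]; exact T.one_mem
      · obtain ⟨x, y, z⟩ := ht.inv.mul hg (hil.trans a.symm) h
        exact hFF _ h x (y.trans hif) (z.trans b)
    rw [eq_top_iff]
    intro x _
    apply P.mem_of_irr T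
    intro g hg
    cases a : P.fst g <;> cases b : P.lst g
    · exact hFF g hg.1 hg a b
    · rw [← T.inv_mem_iff]
      exact hTF _ hg.inv ((P.fst_inv g hg.1).trans b) ((P.lst_inv g hg.1).trans a)
    · exact hTF g hg a b
    · rw [← Subgroup.mul_mem_cancel_right T htT]
      by_cases h : g * t = 1
      · rw [h]; exact T.one_mem
      · obtain ⟨x, y, z⟩ := hg.mul ht (b.trans h1.symm) h
        exact hTF _ x (y.trans a) (z.trans h2)
  rcases trivial_of_indec hG S hinj hgen with h | h
  · exact absurd (Subgroup.zpowers_eq_bot.mp h) ht1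
  · have := hgen (Subgroup.zpowers t) le_rfl (by rw [h]; exact bot_le)
    rw [this]
    trivial

theorem comm_of_mixed (hG : FreelyIndecomposable G) (g : G) (hg : g ≠ 1)
    (hm : P.fst g ≠ P.lst g) (a b : G) : a * b = b * a := by
  by_cases h : ∀ g, P.Irr g → P.fst g = P.lst g
  · exact absurd (P.case_amalgam hG h g hg) hm
  · push Not at h
    obtain ⟨t, ht, hne⟩ := h
    obtain ⟨s, hs⟩ : ∃ s, ∀ g, g ∈ Subgroup.zpowers s := by
      cases h1 : P.fst t <;> cases h2 : P.lst t
      · exact absurd (h1.trans h2.symm) hne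
      · exact ⟨t⁻¹, P.case_hnn hG t⁻¹ ht.inv ((P.fst_inv t ht.1).trans h2)
          ((P.lst_inv t ht.1).trans h1)⟩
      · exact ⟨t, P.case_hnn hG t ht h1 h2⟩
      · exact absurd (h1.trans h2.symm) hne
    obtain ⟨m, rfl⟩ := Subgroup.mem_zpowers_iff.mp (hs a)
    obtain ⟨n, rfl⟩ := Subgroup.mem_zpowers_iff.mp (hs b)
    rw [← zpow_add, ← zpow_add, add_comm]

end Bipolar

/-- Free product structure: a bipolar structure with its two factors. -/
structure FreeProd (G : Type) [Group G] extends Bipolar G where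
  C : Bool → Subgroup G
  nontriv : ∀ i, ∃ x ∈ C i, x ≠ 1
  fst_C : ∀ i x, x ∈ C i → x ≠ 1 → fst x = i
  lst_C : ∀ i x, x ∈ C i → x ≠ 1 → lst x = i
  len_C : ∀ i x, x ∈ C i → x ≠ 1 → len x = 1
  strip : ∀ i g, ∃ l ∈ C i, ∃ g', g = l * g' ∧ (g' = 1 ∨ fst g' ≠ i)

namespace FreeProd

variable {G : Type} [Group G] (P : FreeProd G)

theorem rstrip (i : Bool) (g : G) :
    ∃ l ∈ P.C i, ∃ g', g = g' * l ∧ (g' = 1 ∨ P.lst g' ≠ i) := by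
  obtain ⟨l, hl, g', hg, h⟩ := P.strip i g⁻¹
  refine ⟨l⁻¹, (P.C i).inv_mem hl, g'⁻¹, ?_, ?_⟩
  · rw [← mul_inv_rev, ← hg, inv_inv]
  · by_cases h1 : g' = 1
    · left; simp [h1]
    · right
      rw [P.lst_inv g' h1]
      exact h.resolve_left h1

theorem malnormal {i j : Bool} {z q : G} (hz : z ∈ P.C i) (hz1 : z ≠ 1)
    (hq : q * z * q⁻¹ ∈ P.C j) : i = j ∧ q ∈ P.C i := by
  obtain ⟨l, hl, q', rfl, h⟩ := P.rstrip i q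
  have hy : l * z * l⁻¹ ∈ P.C i := (P.C i).mul_mem ((P.C i).mul_mem hl hz) ((P.C i).inv_mem hl)
  have hy1 : l * z * l⁻¹ ≠ 1 := by simpa using hz1
  have e : q' * l * z * (q' * l)⁻¹ = q' * (l * z * l⁻¹) * q'⁻¹ := by group
  rw [e] at hq
  generalize l * z * l⁻¹ = y at *
  by_cases h1 : q' = 1
  · subst h1
    simp only [one_mul, inv_one, mul_one] at hq ⊢
    exact ⟨(P.fst_C i y hy hy1).symm.trans (P.fst_C j y hq hy1), hl⟩
  · exfalso
    have h2 := h.resolve_left h1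
    have a : P.lst q' ≠ P.fst y := by rwa [P.fst_C i y hy hy1]
    have b : P.lst (q' * y) ≠ P.fst q'⁻¹ := by
      rw [P.lst_mul _ _ h1 hy1 a, P.lst_C i y hy hy1, P.fst_inv q' h1]
      exact h2.symm
    have c := P.mul_ne _ _ h1 hy1 a
    have d := P.len_mul _ _ c (inv_ne_one.mpr h1) b
    rw [P.len_mul _ _ h1 hy1 a] at d
    have x := P.len_pos _ h1
    have y' := P.len_pos _ (inv_ne_one.mpr h1)
    have z' := P.len_pos _ hy1
    rw [P.len_C j _ hq (P.mul_ne _ _ c (inv_ne_one.mpr h1) b)] at d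
    omega

theorem center_trivial (P : FreeProd G) (z : G) (hz : ∀ g, z * g = g * z) : z = 1 := by
  by_contra h1
  by_cases hs : P.fst z = P.lst z
  · obtain ⟨y, hy, hy1⟩ := P.nontriv (!P.fst z)
    have a : P.lst z ≠ P.fst y := by
      rw [P.fst_C _ y hy hy1, hs]; simp
    have b : P.lst y ≠ P.fst z := by
      rw [P.lst_C _ y hy hy1]; simp
    have c := P.fst_mul _ _ h1 hy1 a
    rw [hz, P.fst_mul _ _ hy1 h1 b, P.fst_C _ y hy hy1] at c
    simp at c
  · obtain ⟨l, hl, z', hzz, h⟩ := P.strip (P.fst z) z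
    have hz' : z' ≠ 1 := by
      rintro rfl
      rw [mul_one] at hzz
      subst hzz
      exact hs (P.lst_C _ _ hl h1).symm
    have hf := h.resolve_left hz'
    have hl1 : l ≠ 1 := by
      rintro rfl
      rw [one_mul] at hzz
      exact hf (by rw [← hzz])
    have a : P.lst l ≠ P.fst z' := by rw [P.lst_C _ l hl hl1]; exact hf.symm
    have b : P.lst z = P.lst z' := by
      conv_lhs => rw [hzz]
      exact P.lst_mul _ _ hl1 hz' a
    have c : z = z' * l := by
      have := hz l⁻¹
      rw [eq_inv_mul_iff_mul_eq, ← mul_assoc, mul_inv_eq_iff_eq_mul] at this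
      rw [hzz] at this
      have h3 : l * (l * z') = l * (z' * l) := by rw [this, mul_assoc]
      rw [hzz]; exact mul_left_cancel h3
    have d : P.lst z' ≠ P.fst l := by
      rw [P.fst_C _ l hl hl1, ← b]; exact Ne.symm hs
    have e := P.lst_mul _ _ hz' hl1 d
    rw [← c, P.lst_C _ l hl hl1] at e
    exact hs e.symm

theorem elliptic (K : Subgroup G)
    (hK : ∀ p, ∀ g ∈ K, g ≠ 1 → P.fst (p * g * p⁻¹) = P.lst (p * g * p⁻¹)) :
    ∃ p i, ∀ g ∈ K, p * g * p⁻¹ ∈ P.C i := by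
  by_cases hKt : ∀ g ∈ K, g = 1
  · refine ⟨1, true, fun g hg => ?_⟩
    rw [hKt g hg]; simp [(P.C true).one_mem]
  push Not at hKt
  obtain ⟨a₀, ha₀, ha₀1⟩ := hKt
  -- minimal conjugate
  obtain ⟨p, hp⟩ : ∃ p, ∀ q, P.len (p * a₀ * p⁻¹) ≤ P.len (q * a₀ * q⁻¹) :=
    ⟨Function.argmin (fun p => P.len (p * a₀ * p⁻¹)), fun q =>
      Function.argmin_le (fun p => P.len (p * a₀ * p⁻¹)) q⟩
  obtain ⟨a, ha⟩ : ∃ a, a = p * a₀ * p⁻¹ := ⟨_, rfl⟩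
  have ha1 : a ≠ 1 := by rw [ha]; simpa using ha₀1
  have has : P.fst a = P.lst a := by rw [ha]; exact hK p a₀ ha₀ ha₀1
  have haC : a ∈ P.C (P.fst a) := by
    obtain ⟨l, hl, a', haa, h⟩ := P.strip (P.fst a) a
    by_cases ha' : a' = 1
    · subst ha'
      rw [mul_one] at haa
      rw [← haa] at hl
      exact hl
    exfalso
    have hf := h.resolve_left ha'
    have hl1 : l ≠ 1 := by
      rintro rfl
      rw [one_mul] at haa
      exact hf (by rw [← haa])
    have x1 : P.lst l ≠ P.fst a' := by rw [P.lst_C _ l hl hl1]; exact hf.symm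
    have x2 : P.lst a = P.lst a' := by
      conv_lhs => rw [haa]
      exact P.lst_mul _ _ hl1 ha' x1
    have x3 : P.len a = 1 + P.len a' := by
      conv_lhs => rw [haa]
      rw [P.len_mul _ _ hl1 ha' x1, P.len_C _ l hl hl1]
    obtain ⟨m, hm, a'', haa', h'⟩ := P.rstrip (P.fst a) a'
    have ha'' : a'' ≠ 1 := by
      rintro rfl
      rw [one_mul] at haa'
      subst haa'
      exact hf (P.fst_C _ _ hm ha')
    have hg := h'.resolve_left ha''
    have hm1 : m ≠ 1 := by
      rintro rfl
      rw [mul_one] at haa'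
      subst haa'
      exact hg (x2.symm.trans has.symm)
    have y1 : P.lst a'' ≠ P.fst m := by rw [P.fst_C _ m hm hm1]; exact hg
    have y2 : P.len a' = P.len a'' + 1 := by
      rw [haa', P.len_mul _ _ ha'' hm1 y1, P.len_C _ m hm hm1]
    have z1 : l⁻¹ * p * a₀ * (l⁻¹ * p)⁻¹ = a'' * (m * l) := by
      have : l⁻¹ * p * a₀ * (l⁻¹ * p)⁻¹ = l⁻¹ * (p * a₀ * p⁻¹) * l := by group
      rw [this, ← ha, haa, haa']
      group
    have z2 := hp (l⁻¹ * p)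
    rw [z1, ← ha] at z2
    by_cases hml : m * l = 1
    · rw [hml, mul_one] at z2
      omega
    · have hmlC := (P.C _).mul_mem hm hl
      rw [P.len_mul _ _ ha'' hml (by rw [P.fst_C _ _ hmlC hml]; exact hg),
        P.len_C _ _ hmlC hml] at z2
      omega
  obtain ⟨i, hi⟩ : ∃ i, i = P.fst a := ⟨_, rfl⟩
  rw [← hi] at haC
  refine ⟨p, i, fun b₀ hb₀ => ?_⟩
  by_cases hb₀1 : b₀ = 1
  · subst hb₀1; simp [(P.C i).one_mem]
  -- general mixing principle
  have mix : ∀ q, ∀ b₀ ∈ K, b₀ ≠ 1 → q * a₀ * q⁻¹ ∈ P.C i → P.fst (q * b₀ * q⁻¹) = i := by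
    intro q b₀ hb hb1 hqa
    by_contra hne
    have hqa1 : q * a₀ * q⁻¹ ≠ 1 := by simpa using ha₀1
    have hqb1 : q * b₀ * q⁻¹ ≠ 1 := by simpa using hb1
    have x : P.lst (q * a₀ * q⁻¹) ≠ P.fst (q * b₀ * q⁻¹) := by
      rw [P.lst_C _ _ hqa hqa1]; exact Ne.symm hne
    have e : q * (a₀ * b₀) * q⁻¹ = (q * a₀ * q⁻¹) * (q * b₀ * q⁻¹) := by group
    have y := P.mul_ne _ _ hqa1 hqb1 x
    rw [← e] at y
    have z := hK q (a₀ * b₀) (K.mul_mem ha₀ hb) (by simpa using y)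
    rw [e, P.fst_mul _ _ hqa1 hqb1 x, P.lst_mul _ _ hqa1 hqb1 x, P.fst_C _ _ hqa hqa1,
      ← hK q b₀ hb hb1] at z
    exact hne z.symm
  obtain ⟨b, hb⟩ : ∃ b, b = p * b₀ * p⁻¹ := ⟨_, rfl⟩
  have hb1 : b ≠ 1 := by rw [hb]; simpa using hb₀1
  rw [← hb]
  have hbi : P.fst b = i := by rw [hb]; exact mix p b₀ hb₀ hb₀1 (by rw [← ha]; exact haC)
  obtain ⟨l, hl, b', hbb, h⟩ := P.strip i b
  by_cases hb' : b' = 1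
  · subst hb'
    rw [mul_one] at hbb
    rw [hbb]; exact hl
  exfalso
  have hf := h.resolve_left hb'
  have e : l⁻¹ * p * b₀ * (l⁻¹ * p)⁻¹ = b' * l := by
    have : l⁻¹ * p * b₀ * (l⁻¹ * p)⁻¹ = l⁻¹ * (p * b₀ * p⁻¹) * l := by group
    rw [this, ← hb, hbb]
    group
  have e2 : l⁻¹ * p * a₀ * (l⁻¹ * p)⁻¹ = l⁻¹ * a * l := by
    rw [ha]; group
  have x := mix (l⁻¹ * p) b₀ hb₀ hb₀1
    (by rw [e2]; exact (P.C i).mul_mem ((P.C i).mul_mem ((P.C i).inv_mem hl) haC) hl)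
  rw [e] at x
  -- but `b' * l` starts with a letter not in `C i`
  obtain ⟨m, hm, b'', hbb', h'⟩ := P.rstrip i b'
  have hb'' : b'' ≠ 1 := by
    rintro rfl
    rw [one_mul] at hbb'
    subst hbb'
    exact hf (P.fst_C _ _ hm hb')
  have hg := h'.resolve_left hb''
  have key : ∀ y ∈ P.C i, P.fst (b'' * y) = P.fst b'' := by
    intro y hy
    by_cases hy1 : y = 1
    · rw [hy1, mul_one]
    · exact P.fst_mul _ _ hb'' hy1 (by rw [P.fst_C _ _ hy hy1]; exact hg)
  rw [hbb', mul_assoc, key _ ((P.C i).mul_mem hm hl)] at x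
  rw [hbb', key _ hm] at hf
  exact hf x

end FreeProd

section Concrete

variable {M : Bool → Type} [∀ b, Group (M b)]

open Classical in
/-- The reduced list of letters of an element of the free product. -/
noncomputable def letters (g : CoprodI M) : List (Σ b, M b) :=
  (CoprodI.Word.equiv g).toList

theorem letters_prod {i j : Bool} (w : CoprodI.NeWord M i j) : letters w.prod = w.toList := by
  classical
  unfold letters CoprodI.NeWord.prod
  have : CoprodI.Word.equiv w.toWord.prod = w.toWord :=
    CoprodI.Word.equiv.apply_symm_apply w.toWord
  have h2 : (CoprodI.Word.equiv w.toWord.prod).toList = w.toList :=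
    congrArg CoprodI.Word.toList this
  convert h2

theorem prod_ne_one {i j : Bool} (w : CoprodI.NeWord M i j) : w.prod ≠ 1 := by
  classical
  intro h
  have h1 := letters_prod w
  rw [h] at h1
  apply w.toList_ne_nil
  rw [← h1]
  unfold letters
  have : CoprodI.Word.equiv (1 : CoprodI M) = CoprodI.Word.empty := by
    change (1 : CoprodI M) • CoprodI.Word.empty = _
    rw [one_smul]
  have h2 : (CoprodI.Word.equiv (1 : CoprodI M)).toList = [] :=
    congrArg CoprodI.Word.toList this
  convert h2

theorem exists_neWord (g : CoprodI M) (hg : g ≠ 1) :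
    ∃ i j, ∃ w : CoprodI.NeWord M i j, w.prod = g := by
  classical
  have hw : CoprodI.Word.equiv g ≠ CoprodI.Word.empty := by
    intro h2
    apply hg
    have := congrArg CoprodI.Word.prod h2
    rw [CoprodI.Word.prod_empty] at this
    rw [← this]
    exact (CoprodI.Word.equiv.symm_apply_apply g).symm
  obtain ⟨i, j, w, hw⟩ := CoprodI.NeWord.of_word _ hw
  refine ⟨i, j, w, ?_⟩
  unfold CoprodI.NeWord.prod
  rw [hw]
  exact CoprodI.Word.equiv.symm_apply_apply g

/-- Type of the first letter. -/
noncomputable def cfst (g : CoprodI M) : Bool := ((letters g).head?.map Sigma.fst).getD true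
/-- Type of the last letter. -/
noncomputable def clst (g : CoprodI M) : Bool := ((letters g).getLast?.map Sigma.fst).getD true
/-- Length. -/
noncomputable def clen (g : CoprodI M) : ℕ := (letters g).length

theorem cfst_prod {i j : Bool} (w : CoprodI.NeWord M i j) : cfst w.prod = i := by
  simp [cfst, letters_prod]

theorem clst_prod {i j : Bool} (w : CoprodI.NeWord M i j) : clst w.prod = j := by
  simp [clst, letters_prod]

theorem cmul {g k : CoprodI M} (hg : g ≠ 1) (hk : k ≠ 1) (h : clst g ≠ cfst k) :
    g * k ≠ 1 ∧ cfst (g * k) = cfst g ∧ clst (g * k) = clst k ∧ clen (g * k) = clen g + clen k := by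
  obtain ⟨i, j, w, rfl⟩ := exists_neWord g hg
  obtain ⟨i', j', w', rfl⟩ := exists_neWord k hk
  rw [clst_prod, cfst_prod] at h
  rw [← CoprodI.NeWord.append_prod (hne := h)]
  refine ⟨prod_ne_one _, ?_, ?_, ?_⟩
  · rw [cfst_prod, cfst_prod]
  · rw [clst_prod, clst_prod]
  · unfold clen
    rw [letters_prod, letters_prod, letters_prod, CoprodI.NeWord.toList, List.length_append]

/-- The standard free product structure. -/
noncomputable def coprodFreeProd [∀ b, Nontrivial (M b)] : FreeProd (CoprodI M) where
  fst := cfst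
  lst := clst
  len := clen
  fst_inv g hg := by
    obtain ⟨i, j, w, rfl⟩ := exists_neWord g hg
    rw [← CoprodI.NeWord.inv_prod, cfst_prod, clst_prod]
  len_pos g hg := by
    obtain ⟨i, j, w, rfl⟩ := exists_neWord g hg
    unfold clen
    rw [letters_prod]
    exact List.length_pos_of_ne_nil w.toList_ne_nil
  mul_ne g k hg hk h := (cmul hg hk h).1
  fst_mul g k hg hk h := (cmul hg hk h).2.1
  lst_mul g k hg hk h := (cmul hg hk h).2.2.1
  len_mul g k hg hk h := (cmul hg hk h).2.2.2
  C i := (CoprodI.of (M := M) (i := i)).range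
  nontriv i := by
    obtain ⟨x, hx⟩ := exists_ne (1 : M i)
    exact ⟨CoprodI.of x, ⟨x, rfl⟩, (map_ne_one_iff _ (CoprodI.of_injective i)).mpr hx⟩
  fst_C := by
    rintro i _ ⟨x, rfl⟩ hx
    have hx1 : x ≠ 1 := (map_ne_one_iff _ (CoprodI.of_injective i)).mp hx
    rw [← CoprodI.NeWord.prod_singleton x hx1, cfst_prod]
  lst_C := by
    rintro i _ ⟨x, rfl⟩ hx
    have hx1 : x ≠ 1 := (map_ne_one_iff _ (CoprodI.of_injective i)).mp hx
    rw [← CoprodI.NeWord.prod_singleton x hx1, clst_prod]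
  len_C := by
    rintro i _ ⟨x, rfl⟩ hx
    have hx1 : x ≠ 1 := (map_ne_one_iff _ (CoprodI.of_injective i)).mp hx
    rw [← CoprodI.NeWord.prod_singleton x hx1]
    unfold clen
    rw [letters_prod]
    rfl
  strip := by
    intro i g
    by_cases hg : g = 1
    · exact ⟨1, Subgroup.one_mem _, 1, by simp [hg], Or.inl rfl⟩
    obtain ⟨i', j, w, rfl⟩ := exists_neWord g hg
    have : ∀ i' j (w : CoprodI.NeWord M i' j), ∃ l : M i', ∃ g', w.prod = CoprodI.of l * g' ∧
        (g' = 1 ∨ cfst g' ≠ i') := by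
      intro i' j w
      induction w with
      | singleton x hx => exact ⟨x, 1, by simp, Or.inl rfl⟩
      | append w₁ hne w₂ ih₁ ih₂ =>
        obtain ⟨l, g', h1, h2⟩ := ih₁
        refine ⟨l, g' * w₂.prod, by simp [h1, mul_assoc], ?_⟩
        right
        by_cases hg' : g' = 1
        · rw [hg', one_mul, cfst_prod]
          rw [hg', mul_one] at h1
          have hl : l ≠ 1 := by
            rintro rfl
            exact prod_ne_one w₁ (by rw [h1, map_one])
          have h3 := clst_prod w₁
          rw [h1, ← CoprodI.NeWord.prod_singleton l hl, clst_prod] at h3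
          rw [h3]
          exact hne.symm
        · have h3 := h2.resolve_left hg'
          obtain ⟨a, b, v, rfl⟩ := exists_neWord g' hg'
          rw [cfst_prod] at h3
          have h4 : clst v.prod = clst w₁.prod := by
            by_cases hl : l = 1
            · rw [h1, hl, map_one, one_mul]
            · rw [h1, ← CoprodI.NeWord.prod_singleton l hl,
                ← CoprodI.NeWord.append_prod (hne := Ne.symm h3), clst_prod, clst_prod]
          have h5 : clst v.prod ≠ cfst w₂.prod := by
            rw [h4, clst_prod, cfst_prod]; exact hne
          rw [(cmul (prod_ne_one v) (prod_ne_one w₂) h5).2.1, cfst_prod]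
          exact h3
    by_cases hi : i' = i
    · subst hi
      obtain ⟨l, g', h1, h2⟩ := this _ _ w
      exact ⟨_, ⟨l, rfl⟩, g', h1, h2⟩
    · exact ⟨1, Subgroup.one_mem _, w.prod, by simp, Or.inr (by rw [cfst_prod]; exact hi)⟩

end Concrete

theorem main_aux {H : Type} [Group H] (hH : FreelyIndecomposable H) (h : H)
    {G : Type} [Group G] (P : FreeProd G) (φ : Fin 2 → (H →* G))
    (hφ : ∀ k, Function.Injective (φ k)) (hh : φ 0 h = φ 1 h)
    (hgen : ∀ T : Subgroup G, (∀ k a, φ k a ∈ T) → T = ⊤) : h = 1 := by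
  by_contra hne
  by_cases hmix : ∃ k p a, a ≠ 1 ∧ P.fst (p * φ k a * p⁻¹) ≠ P.lst (p * φ k a * p⁻¹)
  · obtain ⟨k, p, a, ha, hm⟩ := hmix
    have hcomm : ∀ a b : H, a * b = b * a :=
      (P.toBipolar.comap ((MulAut.conj p).toMonoidHom.comp (φ k))
        ((MulAut.conj p).injective.comp (hφ k))).comm_of_mixed hH a ha hm
    have hz : φ 0 h = 1 := by
      apply P.center_trivial
      intro g
      have : Subgroup.centralizer {φ 0 h} = ⊤ := by
        apply hgen
        intro k a
        rw [Subgroup.mem_centralizer_singleton_iff]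
        have hk : φ 0 h = φ k h := by
          fin_cases k
          · rfl
          · exact hh
        rw [hk, ← map_mul, ← map_mul, hcomm]
      have hg : g ∈ Subgroup.centralizer {φ 0 h} := by rw [this]; trivial
      rw [Subgroup.mem_centralizer_singleton_iff] at hg
      first | exact hg | exact hg.symm
    exact hne ((map_eq_one_iff _ (hφ 0)).mp hz)
  · push Not at hmix
    have hell : ∀ k, ∃ p i, ∀ g ∈ (φ k).range, p * g * p⁻¹ ∈ P.C i := by
      intro k
      apply P.elliptic
      rintro p _ ⟨a, rfl⟩ ha
      exact hmix k p a ((map_ne_one_iff _ (hφ k)).mp ha)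
    obtain ⟨p, i, hp⟩ := hell 0
    obtain ⟨q, j, hq⟩ := hell 1
    have hz := hp _ ⟨h, rfl⟩
    have hz1 : p * φ 0 h * p⁻¹ ≠ 1 := by
      simpa using (map_ne_one_iff _ (hφ 0)).mpr hne
    have hz2 : (q * p⁻¹) * (p * φ 0 h * p⁻¹) * (q * p⁻¹)⁻¹ ∈ P.C j := by
      have e : (q * p⁻¹) * (p * φ 0 h * p⁻¹) * (q * p⁻¹)⁻¹ = q * φ 0 h * q⁻¹ := by group
      rw [e, hh]
      exact hq _ ⟨h, rfl⟩
    obtain ⟨hij, hqp⟩ := P.malnormal hz hz1 hz2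
    subst hij
    have htop := hgen ((P.C i).comap (MulAut.conj p).toMonoidHom) (by
      intro k a
      rw [Subgroup.mem_comap]
      change p * φ k a * p⁻¹ ∈ P.C i
      fin_cases k
      · exact hp _ ⟨a, rfl⟩
      · have := (P.C i).mul_mem ((P.C i).mul_mem ((P.C i).inv_mem hqp) (hq _ ⟨a, rfl⟩)) hqp
        have e : (q * p⁻¹)⁻¹ * (q * φ 1 a * q⁻¹) * (q * p⁻¹) = p * φ 1 a * p⁻¹ := by group
        rw [e] at this
        exact this)
    obtain ⟨x, hx, hx1⟩ := P.nontriv (!i)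
    have : p⁻¹ * x * p ∈ (P.C i).comap (MulAut.conj p).toMonoidHom := by rw [htop]; trivial
    rw [Subgroup.mem_comap] at this
    change p * (p⁻¹ * x * p) * p⁻¹ ∈ P.C i at this
    have e : p * (p⁻¹ * x * p) * p⁻¹ = x := by group
    rw [e] at this
    have h1 := P.fst_C _ _ this hx1
    rw [P.fst_C _ _ hx hx1] at h1
    simp at h1

/-- The Boolean-indexed family with the two given groups. -/
def boolFam (A B : Type) (b : Bool) : Type := match b with
  | true => A
  | false => B

instance boolFamGroup (A B : Type) [Group A] [Group B] (b : Bool) : Group (boolFam A B b) :=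
  match b with
  | true => inferInstanceAs (Group A)
  | false => inferInstanceAs (Group B)

instance boolFamNontrivial (A B : Type) [Nontrivial A] [Nontrivial B] (b : Bool) :
    Nontrivial (boolFam A B b) :=
  match b with
  | true => inferInstanceAs (Nontrivial A)
  | false => inferInstanceAs (Nontrivial B)

/-- Lemma 3.3: if `H` is freely indecomposable, `h ∈ H`, and the amalgam `H ∗_{⟨h⟩} H`
(the pushout of the two copies of the inclusion `⟨h⟩ ↪ H`) is isomorphic to a free product
of two nontrivial groups, then `h = 1`. -/
theorem stmt6 (H : Type) [Group H] (hH : FreelyIndecomposable H) (h : H)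
    (G₁ G₂ : Type) [Group G₁] [Group G₂] [Nontrivial G₁] [Nontrivial G₂]
    (iso : Monoid.PushoutI (fun _ : Fin 2 => (Subgroup.zpowers h).subtype) ≃*
      Monoid.Coprod G₁ G₂) :
    h = 1 := by
  let e : Monoid.PushoutI (fun _ : Fin 2 => (Subgroup.zpowers h).subtype) ≃*
      CoprodI (boolFam G₁ G₂) := iso.trans (coprodEquivBool (boolFam G₁ G₂)).symm
  refine main_aux hH h (coprodFreeProd (M := boolFam G₁ G₂))
    (fun k => e.toMonoidHom.comp (Monoid.PushoutI.of (G := fun _ : Fin 2 => H) k)) ?_ ?_ ?_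
  · intro k
    exact e.injective.comp (Monoid.PushoutI.of_injective
      (fun _ => (Subgroup.zpowers h).subtype_injective) k)
  · have h0 := Monoid.PushoutI.of_apply_eq_base
      (fun _ : Fin 2 => (Subgroup.zpowers h).subtype) 0 ⟨h, Subgroup.mem_zpowers h⟩
    have h1 := Monoid.PushoutI.of_apply_eq_base
      (fun _ : Fin 2 => (Subgroup.zpowers h).subtype) 1 ⟨h, Subgroup.mem_zpowers h⟩
    exact congrArg e (h0.trans h1.symm)
  · intro T hT
    rw [eq_top_iff]
    intro x _
    obtain ⟨y, rfl⟩ := e.surjective x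
    induction y using Monoid.PushoutI.induction_on with
    | of i g => exact hT i g
    | base z =>
      rw [← Monoid.PushoutI.of_apply_eq_base
        (fun _ : Fin 2 => (Subgroup.zpowers h).subtype) 0 z]
      exact hT 0 _
    | mul a b ha hb =>
      rw [map_mul]
      exact T.mul_mem (ha trivial) (hb trivial)
end

section
/- Let Λ be a group containing a residually solvable subgroup Λ' of finite index p. Let N be a perfect group (its commutator subgroup is all of N) such that every subgroup of N of index at most p equals N. Then every group homomorphism φ : N → Λ is trivial. (The key mechanism in part (2) of Proposition 2.1 of the paper.) -/
/-- A group is residually solvable if every nontrivial element survives in some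
solvable quotient. -/
def ResiduallySolvable (G : Type*) [Group G] : Prop :=
  ∀ g : G, g ≠ 1 → ∃ (S : Type) (_ : Group S), IsSolvable S ∧ ∃ φ : G →* S, φ g ≠ 1

/-- The key mechanism of Proposition 2.1 (2): if `Λ` has a residually solvable subgroup of
finite index `p`, `N` is perfect, and every subgroup of `N` of index at most `p` is all of
`N`, then every homomorphism `N → Λ` is trivial. -/
theorem stmt7 (Λ : Type) [Group Λ] (Λ' : Subgroup Λ)
    (hres : ResiduallySolvable Λ') (p : ℕ) (hp : p ≠ 0) (hidx : Λ'.index = p)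
    (N : Type) [Group N] (hperf : commutator N = ⊤)
    (hsub : ∀ K : Subgroup N, K.index ≠ 0 → K.index ≤ p → K = ⊤)
    (φ : N →* Λ) :
    ∀ n : N, φ n = 1 := by
  have hrel : Λ'.relIndex φ.range ≠ 0 := fun h => by
    have h2 := Subgroup.relIndex_eq_zero_of_le_right (le_top : φ.range ≤ ⊤) h
    rw [Subgroup.relIndex_top_right] at h2
    exact hp (hidx.symm.trans h2)
  have hle : Λ'.relIndex φ.range ≤ p := by
    have h2 := Subgroup.relIndex_le_of_le_right (H := Λ') (le_top : φ.range ≤ ⊤)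
      (by rw [Subgroup.relIndex_top_right, hidx]; exact hp)
    rwa [Subgroup.relIndex_top_right, hidx] at h2
  have htop : Λ'.comap φ = ⊤ :=
    hsub _ (by rw [Subgroup.index_comap]; exact hrel) (by rw [Subgroup.index_comap]; exact hle)
  have hmem : ∀ n : N, φ n ∈ Λ' := fun n => by
    have h : n ∈ Λ'.comap φ := htop ▸ Subgroup.mem_top n
    exact h
  have hder : ∀ k : ℕ, derivedSeries N k = ⊤ := by
    intro k
    induction k with
    | zero => rfl
    | succ k ih => rw [derivedSeries_succ, ih]; exact hperf
  intro n
  by_contra hn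
  obtain ⟨S, _, hS, ψ, hψ⟩ := hres ⟨φ n, hmem n⟩ (fun h => hn (congrArg Subtype.val h))
  obtain ⟨k, hk⟩ := hS.solvable
  apply hψ
  have h1 := map_derivedSeries_le_derivedSeries (ψ.comp (φ.codRestrict Λ' hmem)) k
  rw [hder k, hk] at h1
  have h2 := h1 (Subgroup.mem_map_of_mem _ (Subgroup.mem_top n))
  exact Subgroup.mem_bot.mp h2
end
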